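/- arXiv:2010.11100 — 3 statements merged into one kernel-verified Lean document; each statement's English description precedes it below -/
import Mathlib

section
/- For every integer n ≥ 3, the maximum number of triples in an M_1-free convex geometric 3-uniform hypergraph on Ω_n equals ∇(n) + n(n−3)/2; that is, ex_circ(n, M_1) = ∇(n) + n(n−3)/2. -/
/-- The list of points of `ZMod n` occurs in this clockwise cyclic order:
anchored at the first point, the clockwise arc-distances from it are
positive and strictly increasing. -/
def CWList (n : ℕ) : List (ZMod n) → Prop
  | [] => True
  | a :: l => ((0 : ℕ) :: l.map fun b => (b - a).val).Chain' (· < ·)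

/-- `H` is a 3-uniform (convex geometric) hypergraph on `Ω_n = ZMod n`. -/
def IsCgh (n : ℕ) (H : Finset (Finset (ZMod n))) : Prop :=
  ∀ e ∈ H, e.card = 3

def nabla (n : ℕ) : ℕ :=
  if Odd n then n * (n - 1) * (n + 1) / 24 else n * (n - 2) * (n + 2) / 24

/-- `H` contains a copy of the configuration `M₁`: two triples whose six
vertices occur in clockwise cyclic order `a₁, a₂, a₃, b₁, b₂, b₃`. -/
def HasM1 (n : ℕ) (H : Finset (Finset (ZMod n))) : Prop :=
  ∃ a₁ a₂ a₃ b₁ b₂ b₃ : ZMod n,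
    CWList n [a₁, a₂, a₃, b₁, b₂, b₃] ∧
    ({a₁, a₂, a₃} : Finset (ZMod n)) ∈ H ∧ ({b₁, b₂, b₃} : Finset (ZMod n)) ∈ H

lemma val_sub_rel (n : ℕ) [NeZero n] (s a b : ZMod n) :
    ((b - s).val ≤ (a - s).val ∧ (a - b).val + (b - s).val = (a - s).val) ∨
    ((a - s).val < (b - s).val ∧ (a - b).val + (b - s).val = (a - s).val + n) := by
  have h : a - s = (a - b) + (b - s) := by ring
  have h1 := ZMod.val_add (a - b) (b - s)
  rw [← h] at h1
  have := ZMod.val_lt (a - b)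
  have := ZMod.val_lt (b - s)
  have := ZMod.val_lt (a - s)
  rcases Nat.lt_or_ge ((a - b).val + (b - s).val) n with h2 | h2
  · rw [Nat.mod_eq_of_lt h2] at h1; left; omega
  · rw [Nat.mod_eq_sub_mod h2, Nat.mod_eq_of_lt (by omega)] at h1; right; omega

lemma val_add_nat (n : ℕ) [NeZero n] (s : ZMod n) (p : ℕ) (hp : p < n) :
    (s + (p : ZMod n) - s).val = p := by
  rw [add_sub_cancel_left, ZMod.val_natCast_of_lt hp]

lemma eq_of_val_sub (n : ℕ) [NeZero n] (s a b : ZMod n) (h : (a - s).val = (b - s).val) :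
    a = b := by
  have := ZMod.val_injective n h
  exact sub_left_injective this

def tri (n : ℕ) (s : ZMod n) (p q : ℕ) : Finset (ZMod n) := {s, s + (p : ZMod n), s + (q : ZMod n)}

lemma mem_tri (n : ℕ) [NeZero n] (s x : ZMod n) (p q : ℕ) (hq : q < n) (hp : p < n) :
    x ∈ tri n s p q ↔ ((x - s).val = 0 ∨ (x - s).val = p ∨ (x - s).val = q) := by
  have e1 := val_add_nat n s p hp
  have e2 := val_add_nat n s q hq
  simp only [tri, Finset.mem_insert, Finset.mem_singleton]
  constructor
  · rintro (h | h | h)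
    · left; simp [h]
    · right; left; rw [h]; exact e1
    · right; right; rw [h]; exact e2
  · rintro (h | h | h)
    · left; exact eq_of_val_sub n s _ _ (by simpa using h)
    · right; left; exact eq_of_val_sub n s _ _ (by omega)
    · right; right; exact eq_of_val_sub n s _ _ (by omega)

lemma tri_card (n : ℕ) [NeZero n] (s : ZMod n) (p q : ℕ) (hp : 0 < p) (hpq : p < q) (hq : q < n) :
    (tri n s p q).card = 3 := by
  have e1 := val_add_nat n s p (by omega)
  have e2 := val_add_nat n s q hq
  have e0 : (s - s).val = 0 := by simp
  unfold tri
  rw [Finset.card_eq_three]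
  refine ⟨_, _, _, ?_, ?_, ?_, rfl⟩
  · intro h; rw [← h] at e1; omega
  · intro h; rw [← h] at e2; omega
  · intro h; rw [← h] at e2; omega

/-- A 3-set listed in increasing order relative to `s`. -/
lemma sort_three (n : ℕ) [NeZero n] (s : ZMod n) (T : Finset (ZMod n)) (hT : T.card = 3) :
    ∃ a b c, T = {a, b, c} ∧ (a - s).val < (b - s).val ∧ (b - s).val < (c - s).val := by
  obtain ⟨x, y, z, hxy, hxz, hyz, rfl⟩ := Finset.card_eq_three.1 hT
  have h1 : (x - s).val ≠ (y - s).val := fun h => hxy (eq_of_val_sub n s _ _ h)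
  have h2 : (x - s).val ≠ (z - s).val := fun h => hxz (eq_of_val_sub n s _ _ h)
  have h3 : (y - s).val ≠ (z - s).val := fun h => hyz (eq_of_val_sub n s _ _ h)
  rcases Nat.lt_or_gt_of_ne h1 with h1 | h1 <;> rcases Nat.lt_or_gt_of_ne h2 with h2 | h2 <;>
    rcases Nat.lt_or_gt_of_ne h3 with h3 | h3
  · exact ⟨x, y, z, rfl, h1, h3⟩
  · exact ⟨x, z, y, by ext; simp; tauto, h2, h3⟩
  · omega
  · exact ⟨z, x, y, by ext; simp; tauto, h2, h1⟩
  · exact ⟨y, x, z, by ext; simp; tauto, h1, h2⟩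
  · omega
  · exact ⟨y, z, x, by ext; simp; tauto, h3, h2⟩
  · exact ⟨z, y, x, by ext; simp; tauto, h3, h1⟩

lemma cw_iff (n : ℕ) (a₁ a₂ a₃ b₁ b₂ b₃ : ZMod n) :
    CWList n [a₁, a₂, a₃, b₁, b₂, b₃] ↔
      0 < (a₂ - a₁).val ∧ (a₂ - a₁).val < (a₃ - a₁).val ∧ (a₃ - a₁).val < (b₁ - a₁).val ∧
      (b₁ - a₁).val < (b₂ - a₁).val ∧ (b₂ - a₁).val < (b₃ - a₁).val := by
  simp [CWList, List.Chain']

lemma hasM1_of (n : ℕ) [NeZero n] (H : Finset (Finset (ZMod n))) (hH : IsCgh n H)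
    (s : ZMod n) (m : ℕ) (T T' : Finset (ZMod n)) (hT : T ∈ H) (hT' : T' ∈ H)
    (h : ∀ x ∈ T, (x - s).val < m) (h' : ∀ x ∈ T', m ≤ (x - s).val) : HasM1 n H := by
  obtain ⟨a, b, c, rfl, h1, h2⟩ := sort_three n s T (hH _ hT)
  obtain ⟨a', b', c', rfl, h1', h2'⟩ := sort_three n s T' (hH _ hT')
  refine ⟨a, b, c, a', b', c', ?_, hT, hT'⟩
  have k1 := h c (by simp)
  have k2 := h' a' (by simp)
  rw [cw_iff]
  have := val_sub_rel n s b a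
  have := val_sub_rel n s c a
  have := val_sub_rel n s a' a
  have := val_sub_rel n s b' a
  have := val_sub_rel n s c' a
  omega

def Chosen (n : ℕ) (H : Finset (Finset (ZMod n))) (s : ZMod n) (m : ℕ) : Prop :=
  (∀ T ∈ H, ¬ ∀ x ∈ T, (x - s).val < m) ∧
    (2 * m ≤ n ∨ ∃ T ∈ H, ∀ x ∈ T, m ≤ (x - s).val)

lemma chosen_cover (n : ℕ) (H : Finset (Finset (ZMod n))) (s s' : ZMod n) (m m' : ℕ)
    (h : Chosen n H s m) (h' : Chosen n H s' m')
    (hc : ∀ x, (x - s).val < m ∨ (x - s').val < m') (hm : n < m + m') : False := by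
  obtain ⟨f, g⟩ := h
  obtain ⟨f', g'⟩ := h'
  rcases g with g | ⟨T, hT, g⟩
  · rcases g' with g' | ⟨T, hT, g'⟩
    · omega
    · exact f T hT fun x hx => (hc x).resolve_right (by have := g' x hx; omega)
  · exact f' T hT fun x hx => (hc x).resolve_left (by have := g x hx; omega)

lemma tri_inj (n : ℕ) [NeZero n] (H : Finset (Finset (ZMod n))) (s s' : ZMod n) (p q p' q' : ℕ)
    (hp : 0 < p) (hpq : p < q) (hq : q < n) (hp' : 0 < p') (hpq' : p' < q') (hq' : q' < n)
    (h : Chosen n H s (q + 1)) (h' : Chosen n H s' (q' + 1))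
    (e : tri n s p q = tri n s' p' q') : s = s' ∧ p = p' ∧ q = q' := by
  have key : ∀ x, ((x - s).val = 0 ∨ (x - s).val = p ∨ (x - s).val = q) ↔
      ((x - s').val = 0 ∨ (x - s').val = p' ∨ (x - s').val = q') := by
    intro x
    rw [← mem_tri n s x p q hq (by omega), e, mem_tri n s' x p' q' hq' (by omega)]
  have e1 := val_add_nat n s p (by omega)
  have e2 := val_add_nat n s q hq
  have e0 : (s - s).val = 0 := by simp
  have e0' : (s' - s').val = 0 := by simp
  have k0 := (key s).1 (by omega)
  have k1 := (key (s + (p : ZMod n))).1 (by omega)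
  have k2 := (key (s + (q : ZMod n))).1 (by omega)
  have r0 := val_sub_rel n s s s'
  have r1 := val_sub_rel n s (s + (p : ZMod n)) s'
  have r2 := val_sub_rel n s (s + (q : ZMod n)) s'
  rcases (key s').2 (by omega) with hs | hs | hs
  · have : s = s' := eq_of_val_sub n s _ _ (by omega)
    refine ⟨this, ?_⟩
    subst this
    omega
  · exfalso
    refine chosen_cover n H s s' _ _ h h' ?_ (by omega)
    intro x
    have := val_sub_rel n s x s'
    have := ZMod.val_lt (x - s)
    omega
  · exfalso
    refine chosen_cover n H s s' _ _ h h' ?_ (by omega)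
    intro x
    have := val_sub_rel n s x s'
    have := ZMod.val_lt (x - s)
    omega

def idx (n : ℕ) : Finset (Σ _ : ℕ, ℕ × ℕ) :=
  (Finset.range (n / 2 + 1)).sigma
    (fun k => Finset.range (if 2 * k < n then n else k) ×ˢ Finset.range (k - 2))

lemma mem_idx (n k u j : ℕ) : (⟨k, (u, j)⟩ : Σ _ : ℕ, ℕ × ℕ) ∈ idx n ↔
    2 * k ≤ n ∧ u < n ∧ (2 * k < n ∨ u < k) ∧ j + 2 < k := by
  simp only [idx, Finset.mem_sigma, Finset.mem_product, Finset.mem_range]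
  split_ifs <;> omega

lemma sum_aux (m : ℕ) : 2 * ∑ k ∈ Finset.range (m + 3), (k - 2) = m * (m + 1) := by
  induction m with
  | zero => decide
  | succ m ih =>
    rw [show m + 1 + 3 = (m + 3) + 1 by ring, Finset.sum_range_succ, mul_add, ih,
      show m + 3 - 2 = m + 1 by omega]
    ring

lemma choose_three (n : ℕ) : 6 * (n + 2).choose 3 = (n + 2) * (n + 1) * n := by
  induction n with
  | zero => decide
  | succ n ih =>
    have h2 : 2 * (n + 2).choose 2 = (n + 2) * (n + 1) := by
      have := Nat.triangle_succ (n + 1)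
      rw [Nat.choose_two_right]
      have h : 2 ∣ (n + 2) * (n + 2 - 1) := (Nat.even_mul_pred_self (n + 2)).two_dvd
      rw [Nat.mul_div_cancel' h]; rfl
    rw [show n + 1 + 2 = (n + 2) + 1 by ring, Nat.choose_succ_succ' (n + 2) 2, mul_add, ih]
    nlinarith

lemma count (n : ℕ) (hn : 3 ≤ n) :
    (idx n).card + (nabla n + n * (n - 3) / 2) = n.choose 3 := by
  rw [idx, Finset.card_sigma]
  simp only [Finset.card_product, Finset.card_range]
  obtain ⟨m, rfl | rfl⟩ : ∃ m, n = 2 * m + 3 ∨ n = 2 * m + 4 :=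
    ⟨(n - 3) / 2, by omega⟩
  · have hodd : Odd (2 * m + 3) := ⟨m + 1, by ring⟩
    have c := choose_three (2 * m + 1)
    have h1 : ∑ k ∈ Finset.range ((2 * m + 3) / 2 + 1),
        (if 2 * k < 2 * m + 3 then 2 * m + 3 else k) * (k - 2) =
        (2 * m + 3) * ∑ k ∈ Finset.range (m + 2), (k - 2) := by
      rw [Finset.mul_sum, show (2 * m + 3) / 2 + 1 = m + 2 by omega]
      refine Finset.sum_congr rfl fun k hk => ?_
      rw [if_pos (by have := Finset.mem_range.1 hk; omega)]
    have h2 : 2 * ∑ k ∈ Finset.range (m + 2), (k - 2) + m = m * m := by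
      rcases m with _ | m
      · decide
      · have := sum_aux m
        rw [show m + 1 + 2 = m + 3 by ring, this]; ring
    rw [h1, nabla, if_pos hodd, show 2 * m + 3 - 1 = 2 * (m + 1) by omega,
      show 2 * m + 3 - 3 = 2 * m by omega]
    rw [show (2 * m + 3) * (2 * m) / 2 = (2 * m + 3) * m by
      rw [show (2 * m + 3) * (2 * m) = ((2 * m + 3) * m) * 2 by ring]; simp]
    have h3 : 24 ∣ (2 * m + 3) * (2 * (m + 1)) * (2 * m + 3 + 1) := by
      have : 6 ∣ (m + 1) * (m + 2) * (2 * m + 3) := by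
        clear * -
        induction m with
        | zero => decide
        | succ m ih =>
          have : (m + 1 + 1) * (m + 1 + 2) * (2 * (m + 1) + 3) =
            (m + 1) * (m + 2) * (2 * m + 3) + 6 * (m + 2) ^ 2 := by ring
          rw [this]
          exact dvd_add ih (dvd_mul_right _ _)
      obtain ⟨c, hc⟩ := this
      exact ⟨c, by nlinarith⟩
    obtain ⟨d, hd⟩ := h3
    rw [hd, Nat.mul_div_cancel_left _ (by norm_num)]
    rw [show 2 * m + 1 + 2 = 2 * m + 3 by ring] at c
    generalize ∑ k ∈ Finset.range (m + 2), (k - 2) = S at *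
    generalize (2 * m + 3).choose 3 = C at *
    zify at *
    have h4 : (S : ℤ) * 2 = m * m - m := by linarith
    have : (24 : ℤ) * ((2 * m + 3) * S + (d + (2 * m + 3) * m)) = 24 * C := by
      linear_combination (12 * (2 * m + 3)) * h4 - hd - 4 * c
    linarith
  · have hodd : ¬ Odd (2 * m + 4) := by
      rw [Nat.not_odd_iff_even]; exact ⟨m + 2, by ring⟩
    have c := choose_three (2 * m + 2)
    have h1 : ∑ k ∈ Finset.range ((2 * m + 4) / 2 + 1),
        (if 2 * k < 2 * m + 4 then 2 * m + 4 else k) * (k - 2) =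
        (2 * m + 4) * ∑ k ∈ Finset.range (m + 2), (k - 2) + (m + 2) * m := by
      rw [Finset.mul_sum, show (2 * m + 4) / 2 + 1 = m + 2 + 1 by omega, Finset.sum_range_succ]
      congr 1
      · refine Finset.sum_congr rfl fun k hk => ?_
        rw [if_pos (by have := Finset.mem_range.1 hk; omega)]
      · rw [if_neg (by omega)]; rfl
    have h2 : 2 * ∑ k ∈ Finset.range (m + 2), (k - 2) + m = m * m := by
      rcases m with _ | m
      · decide
      · have := sum_aux m
        rw [show m + 1 + 2 = m + 3 by ring, this]; ring
    rw [h1, nabla, if_neg hodd, show 2 * m + 4 - 2 = 2 * (m + 1) by omega,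
      show 2 * m + 4 - 3 = 2 * m + 1 by omega]
    rw [show (2 * m + 4) * (2 * m + 1) / 2 = (m + 2) * (2 * m + 1) by
      rw [show (2 * m + 4) * (2 * m + 1) = ((m + 2) * (2 * m + 1)) * 2 by ring]; simp]
    have h3 : 24 ∣ (2 * m + 4) * (2 * (m + 1)) * (2 * m + 4 + 2) := by
      have : 3 ∣ (m + 1) * (m + 2) * (m + 3) := by
        clear * -
        induction m with
        | zero => decide
        | succ m ih =>
          have : (m + 1 + 1) * (m + 1 + 2) * (m + 1 + 3) =
            (m + 1) * (m + 2) * (m + 3) + 3 * ((m + 2) * (m + 3)) := by ring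
          rw [this]
          exact dvd_add ih (dvd_mul_right _ _)
      obtain ⟨c, hc⟩ := this
      exact ⟨c, by nlinarith⟩
    obtain ⟨d, hd⟩ := h3
    rw [hd, Nat.mul_div_cancel_left _ (by norm_num)]
    rw [show 2 * m + 2 + 2 = 2 * m + 4 by ring] at c
    generalize ∑ k ∈ Finset.range (m + 2), (k - 2) = S at *
    generalize (2 * m + 4).choose 3 = C at *
    zify at *
    have h4 : (S : ℤ) * 2 = m * m - m := by linarith
    have : (24 : ℤ) * ((2 * m + 4) * S + (m + 2) * m + (d + (m + 2) * (2 * m + 1))) = 24 * C := by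
      linear_combination (12 * (2 * m + 4)) * h4 - hd - 4 * c
    linarith

lemma upper (n : ℕ) [NeZero n] (H : Finset (Finset (ZMod n))) (hH : IsCgh n H)
    (hM : ¬ HasM1 n H) : (idx n).card + H.card ≤ n.choose 3 := by
  classical
  have hsub : H ⊆ Finset.powersetCard 3 Finset.univ := fun e he => by
    simp [Finset.mem_powersetCard, hH e he]
  have htot : (Finset.powersetCard 3 (Finset.univ : Finset (ZMod n))).card = n.choose 3 := by
    rw [Finset.card_powersetCard, Finset.card_univ, ZMod.card]
  rw [← htot, ← Finset.card_sdiff_add_card_eq_card hsub]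
  refine Nat.add_le_add_right ?_ _
  let F : ℕ → ℕ → Prop := fun u k => ∀ T ∈ H, ¬ ∀ x ∈ T, (x - (u : ZMod n)).val < k
  let S : ℕ → ℕ → ZMod n := fun u k => if F u k then (u : ZMod n) else (u : ZMod n) + (k : ZMod n)
  let Q : ℕ → ℕ → ℕ := fun u k => if F u k then k - 1 else n - k - 1
  have hch : ∀ u k, 2 < k → 2 * k ≤ n → Chosen n H (S u k) (Q u k + 1) := by
    intro u k hk hkn
    by_cases hF : F u k
    · simp only [S, Q, if_pos hF]
      refine ⟨?_, Or.inl (by omega)⟩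
      rw [show k - 1 + 1 = k by omega]
      exact hF
    · simp only [S, Q, if_neg hF]
      rw [show n - k - 1 + 1 = n - k by omega]
      simp only [F] at hF
      push Not at hF
      obtain ⟨T, hT, hx⟩ := hF
      have ek := val_add_nat n (u : ZMod n) k (by omega)
      refine ⟨?_, Or.inr ⟨T, hT, ?_⟩⟩
      · intro T' hT' hx'
        refine hM (hasM1_of n H hH (u : ZMod n) k T T' hT hT' hx ?_)
        intro x hxT
        have := hx' x hxT
        have := val_sub_rel n (u : ZMod n) x ((u : ZMod n) + (k : ZMod n))
        omega
      · intro x hxT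
        have := hx x hxT
        have := val_sub_rel n (u : ZMod n) x ((u : ZMod n) + (k : ZMod n))
        omega
  have hQ : ∀ u k, 2 < k → 2 * k ≤ n → k ≤ Q u k + 1 ∧ Q u k < n := by
    intro u k hk hkn
    simp only [Q]
    split_ifs <;> omega
  refine Finset.card_le_card_of_injOn
    (fun i => tri n (S i.2.1 i.1) (i.2.2 + 1) (Q i.2.1 i.1)) ?_ ?_
  · rintro ⟨k, u, j⟩ hi
    obtain ⟨h1, h2, h3, h4⟩ := (mem_idx n k u j).1 hi
    have hq := hQ u k (by omega) h1
    have hc := hch u k (by omega) h1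
    simp only [Finset.coe_sdiff, Set.mem_sdiff, Finset.mem_coe, Finset.mem_powersetCard]
    refine ⟨⟨Finset.subset_univ _, tri_card n _ _ _ (by omega) (by omega) (by omega)⟩, ?_⟩
    intro hmem
    refine hc.1 _ hmem ?_
    intro x hx
    rw [mem_tri n _ _ _ _ (by omega) (by omega)] at hx
    omega
  · rintro ⟨k, u, j⟩ hi ⟨k', u', j'⟩ hi' heq
    obtain ⟨h1, h2, h3, h4⟩ := (mem_idx n k u j).1 hi
    obtain ⟨h1', h2', h3', h4'⟩ := (mem_idx n k' u' j').1 hi'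
    have hq := hQ u k (by omega) h1
    have hc := hch u k (by omega) h1
    have hq' := hQ u' k' (by omega) h1'
    have hc' := hch u' k' (by omega) h1'
    change tri n (S u k) (j + 1) (Q u k) = tri n (S u' k') (j' + 1) (Q u' k') at heq
    obtain ⟨es, ep, eq⟩ := tri_inj n H _ _ _ _ _ _ (by omega) (by omega) (by omega) (by omega)
      (by omega) (by omega) hc hc' heq
    have ej : j = j' := by omega
    have hcast : ∀ a b : ℕ, a < n → b < n → (a : ZMod n) = (b : ZMod n) → a = b := by
      intro a b ha hb hab
      have := congrArg ZMod.val hab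
      rwa [ZMod.val_natCast_of_lt ha, ZMod.val_natCast_of_lt hb] at this
    have main : k = k' ∧ u = u' := by
      simp only [S, Q] at es eq
      split_ifs at es eq
      · exact ⟨by omega, hcast _ _ h2 h2' es⟩
      · have := hcast u (u' + k') (by omega) (by omega) (by push_cast; exact es)
        omega
      · have := hcast (u + k) u' (by omega) (by omega) (by push_cast; exact es)
        omega
      · have hk : k = k' := by omega
        subst hk
        exact ⟨rfl, hcast _ _ h2 h2' (add_right_cancel es)⟩
    obtain ⟨rfl, rfl⟩ := main
    subst ej
    rfl

lemma lower (n : ℕ) [NeZero n] : ∃ H : Finset (Finset (ZMod n)),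
    IsCgh n H ∧ ¬ HasM1 n H ∧ n.choose 3 ≤ (idx n).card + H.card := by
  classical
  have htot : (Finset.powersetCard 3 (Finset.univ : Finset (ZMod n))).card = n.choose 3 := by
    rw [Finset.card_powersetCard, Finset.card_univ, ZMod.card]
  let I : Finset (Finset (ZMod n)) :=
    (idx n).image (fun i => tri n (i.2.1 : ZMod n) (i.2.2 + 1) (i.1 - 1))
  have hI : ∀ a b c : ZMod n, 0 < (b - a).val → (b - a).val < (c - a).val →
      2 * ((c - a).val + 1) ≤ n → (2 * ((c - a).val + 1) < n ∨ a.val < (c - a).val + 1) →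
      ({a, b, c} : Finset (ZMod n)) ∈ I := by
    intro a b c h1 h2 h3 h4
    refine Finset.mem_image.2 ⟨⟨(c - a).val + 1, (a.val, (b - a).val - 1)⟩, ?_, ?_⟩
    · rw [mem_idx]
      exact ⟨h3, ZMod.val_lt a, h4, by omega⟩
    · simp only [tri]
      rw [show (b - a).val - 1 + 1 = (b - a).val by omega, Nat.add_sub_cancel]
      simp
  refine ⟨Finset.powersetCard 3 Finset.univ \ I, ?_, ?_, ?_⟩
  · intro e he
    exact (Finset.mem_powersetCard.1 (Finset.mem_sdiff.1 he).1).2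
  · rintro ⟨a, b, c, a', b', c', h, hT, hT'⟩
    rw [cw_iff] at h
    have n1 := (Finset.mem_sdiff.1 hT).2
    have n2 := (Finset.mem_sdiff.1 hT').2
    have i1 : ¬ (2 * ((c - a).val + 1) ≤ n ∧
        (2 * ((c - a).val + 1) < n ∨ a.val < (c - a).val + 1)) :=
      fun x => n1 (hI a b c (by omega) (by omega) x.1 x.2)
    have r1 := val_sub_rel n a b' a'
    have r2 := val_sub_rel n a c' a'
    have i2 : ¬ (2 * ((c' - a').val + 1) ≤ n ∧
        (2 * ((c' - a').val + 1) < n ∨ a'.val < (c' - a').val + 1)) :=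
      fun x => n2 (hI a' b' c' (by omega) (by omega) x.1 x.2)
    have r3 := val_sub_rel n 0 a' a
    simp only [sub_zero] at r3
    have l1 := ZMod.val_lt (c' - a)
    have l2 := ZMod.val_lt a
    have l3 := ZMod.val_lt a'
    omega
  · have h1 := Finset.le_card_sdiff I (Finset.powersetCard 3 (Finset.univ : Finset (ZMod n)))
    have h2 : I.card ≤ (idx n).card := Finset.card_image_le
    omega

theorem ex_M1 (n : ℕ) (hn : 3 ≤ n) :
    IsGreatest {m : ℕ | ∃ H : Finset (Finset (ZMod n)),
        IsCgh n H ∧ ¬ HasM1 n H ∧ H.card = m}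
      (nabla n + n * (n - 3) / 2) := by
  have : NeZero n := ⟨by omega⟩
  have hc := count n hn
  constructor
  · obtain ⟨H, h1, h2, h3⟩ := lower n
    have := upper n H h1 h2
    exact ⟨H, h1, h2, by omega⟩
  · rintro m ⟨H, h1, h2, rfl⟩
    have := upper n H h1 h2
    omega
end

section
/- For every integer n ≥ 7, the maximum number of triples in an M_2-free cgh on Ω_n equals C(n,2) − 2; that is, ex_circ(n, M_2) = n(n−1)/2 − 2. -/
/-- `H` contains a copy of the configuration `M₂`: two vertex-disjoint triples
whose six vertices occur in clockwise cyclic order `a₁, a₂, b₁, a₃, b₂, b₃`. -/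
def HasM2 (n : ℕ) (H : Finset (Finset (ZMod n))) : Prop :=
  ∃ a₁ a₂ a₃ b₁ b₂ b₃ : ZMod n,
    CWList n [a₁, a₂, b₁, a₃, b₂, b₃] ∧
    ({a₁, a₂, a₃} : Finset (ZMod n)) ∈ H ∧ ({b₁, b₂, b₃} : Finset (ZMod n)) ∈ H

namespace M2

lemma val_sub_ite {n : ℕ} [NeZero n] (a b : ZMod n) :
    (b - a).val = if a.val ≤ b.val then b.val - a.val else n + b.val - a.val := by
  split_ifs with h
  · exact ZMod.val_sub h
  · have h1 : (a - b).val = a.val - b.val := ZMod.val_sub (by omega)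
    have h2 : a - b ≠ 0 := by
      intro h0
      rw [h0, ZMod.val_zero] at h1
      omega
    have h3 : b - a = -(a - b) := by ring
    have : NeZero (a - b) := ⟨h2⟩
    rw [h3, ZMod.val_neg_of_ne_zero, h1]
    have := ZMod.val_lt a
    omega

lemma cw6 {n : ℕ} (a b c d e f : ZMod n) :
    CWList n [a, b, c, d, e, f] ↔ 0 < (b - a).val ∧ (b - a).val < (c - a).val ∧
      (c - a).val < (d - a).val ∧ (d - a).val < (e - a).val ∧ (e - a).val < (f - a).val := by
  unfold CWList List.Chain'
  simp [-ZMod.val_pos]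

/-- six-fold disjunction: cyclically sorted -/
lemma cw6_sorted {n : ℕ} [NeZero n] (a b c d e f : ZMod n) :
    CWList n [a, b, c, d, e, f] ↔
      (a.val < b.val ∧ b.val < c.val ∧ c.val < d.val ∧ d.val < e.val ∧ e.val < f.val) ∨
      (b.val < c.val ∧ c.val < d.val ∧ d.val < e.val ∧ e.val < f.val ∧ f.val < a.val) ∨
      (c.val < d.val ∧ d.val < e.val ∧ e.val < f.val ∧ f.val < a.val ∧ a.val < b.val) ∨
      (d.val < e.val ∧ e.val < f.val ∧ f.val < a.val ∧ a.val < b.val ∧ b.val < c.val) ∨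
      (e.val < f.val ∧ f.val < a.val ∧ a.val < b.val ∧ b.val < c.val ∧ c.val < d.val) ∨
      (f.val < a.val ∧ a.val < b.val ∧ b.val < c.val ∧ c.val < d.val ∧ d.val < e.val) := by
  rw [cw6]
  simp only [val_sub_ite]
  have := ZMod.val_lt a
  have := ZMod.val_lt b
  have := ZMod.val_lt c
  have := ZMod.val_lt d
  have := ZMod.val_lt e
  have := ZMod.val_lt f
  generalize a.val = a at *
  generalize b.val = b at *
  generalize c.val = c at *
  generalize d.val = d at *
  generalize e.val = e at *
  generalize f.val = f at *
  split_ifs <;> omega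

lemma cw6_add {n : ℕ} (t a b c d e f : ZMod n) :
    CWList n [t + a, t + b, t + c, t + d, t + e, t + f] ↔ CWList n [a, b, c, d, e, f] := by
  simp [cw6]

/-- the triple `i+a, i+b, i+c` is in `H` -/
def T {n : ℕ} (H : Finset (Finset (ZMod n))) (i : ZMod n) (a b c : ℕ) : Prop :=
  ({i + a, i + b, i + c} : Finset (ZMod n)) ∈ H

lemma T_swap12 {n : ℕ} (H : Finset (Finset (ZMod n))) (i : ZMod n) (a b c : ℕ) :
    T H i a b c ↔ T H i b a c := by
  unfold T
  rw [Finset.insert_comm]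

lemma T_swap23 {n : ℕ} (H : Finset (Finset (ZMod n))) (i : ZMod n) (a b c : ℕ) :
    T H i a b c ↔ T H i a c b := by
  unfold T
  rw [Finset.pair_comm (i + (b : ZMod n))]

lemma T_shift {n : ℕ} (H : Finset (Finset (ZMod n))) (i : ZMod n) (j a b c : ℕ) :
    T H (i + j) a b c ↔ T H i (j + a) (j + b) (j + c) := by
  unfold T
  simp [add_assoc]

lemma T_per {n : ℕ} (H : Finset (Finset (ZMod n))) (i : ZMod n) (a b c : ℕ) :
    T H i a b (n + c) ↔ T H i a b c := by
  unfold T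
  simp

lemma free6 {n : ℕ} {H : Finset (Finset (ZMod n))} (hH : ¬ HasM2 n H) (i : ZMod n)
    {p q r s t u : ℕ} (h1 : p < q) (h2 : q < r) (h3 : r < s) (h4 : s < t) (h5 : t < u)
    (h6 : u < n) :
    ¬ (T H i p q s ∧ T H i r t u) ∧ ¬ (T H i p r u ∧ T H i q s t) ∧
    ¬ (T H i p s t ∧ T H i q r u) ∧ ¬ (T H i p r s ∧ T H i q t u) ∧
    ¬ (T H i p q t ∧ T H i r s u) ∧ ¬ (T H i p s u ∧ T H i q r t) := by
  have : NeZero n := ⟨by omega⟩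
  have key : ∀ a b c d e f : ℕ, a < n → b < n → c < n → d < n → e < n → f < n →
      ((a < b ∧ b < c ∧ c < d ∧ d < e ∧ e < f) ∨
      (b < c ∧ c < d ∧ d < e ∧ e < f ∧ f < a) ∨
      (c < d ∧ d < e ∧ e < f ∧ f < a ∧ a < b) ∨
      (d < e ∧ e < f ∧ f < a ∧ a < b ∧ b < c) ∨
      (e < f ∧ f < a ∧ a < b ∧ b < c ∧ c < d) ∨
      (f < a ∧ a < b ∧ b < c ∧ c < d ∧ d < e)) → T H i a b d → T H i c e f → False := by
    intro a b c d e f ha hb hc hd he hf h hA hB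
    apply hH
    refine ⟨i + a, i + b, i + d, i + c, i + e, i + f, ?_, hA, hB⟩
    rw [cw6_add, cw6_sorted]
    simpa only [ZMod.val_cast_of_lt ha, ZMod.val_cast_of_lt hb, ZMod.val_cast_of_lt hc,
      ZMod.val_cast_of_lt hd, ZMod.val_cast_of_lt he, ZMod.val_cast_of_lt hf] using h
  refine ⟨?_, ?_, ?_, ?_, ?_, ?_⟩ <;> rintro ⟨hA, hB⟩
  -- p q r s t u
  · exact key p q r s t u (by omega) (by omega) (by omega) (by omega) (by omega) (by omega)
      (by omega) hA hB
  -- A = p r u, cyclic order u p q r s t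
  · rw [T_swap23, T_swap12] at hA
    exact key u p q r s t (by omega) (by omega) (by omega) (by omega) (by omega) (by omega)
      (by omega) hA hB
  -- A = p s t, cyclic order s t u p q r
  · rw [T_swap12, T_swap23] at hA
    rw [T_swap23, T_swap12] at hB
    exact key s t u p q r (by omega) (by omega) (by omega) (by omega) (by omega) (by omega)
      (by omega) hA hB
  -- A = p r s, B = q t u : order t u p q r s
  · rw [T_swap12, T_swap23] at hB
    exact key t u p q r s (by omega) (by omega) (by omega) (by omega) (by omega) (by omega)
      (by omega) hB hA
  -- A = p q t, B = r s u : order r s t u p q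
  · rw [T_swap23, T_swap12] at hA
    exact key r s t u p q (by omega) (by omega) (by omega) (by omega) (by omega) (by omega)
      (by omega) hB hA
  -- A = p s u, B = q r t : order q r s t u p
  · rw [T_swap12, T_swap23] at hA
    exact key q r s t u p (by omega) (by omega) (by omega) (by omega) (by omega) (by omega)
      (by omega) hB hA

end M2
namespace M2
open Finset

open Classical in
/-- third vertices of triples on the side `i, i+1` -/
noncomputable def D {n : ℕ} (H : Finset (Finset (ZMod n))) (i : ZMod n) : Finset ℕ :=
  (Ico 2 n).filter (fun y => T H i 0 1 y)

open Classical in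
/-- pairs forming a triple with both `i` and `i+1` -/
noncomputable def G {n : ℕ} (H : Finset (Finset (ZMod n))) (i : ZMod n) : Finset (ℕ × ℕ) :=
  ((Ico 2 n) ×ˢ (Ico 2 n)).filter
    (fun p => p.1 < p.2 ∧ T H i 0 p.1 p.2 ∧ T H i 1 p.1 p.2)

lemma mem_D {n : ℕ} {H : Finset (Finset (ZMod n))} {i : ZMod n} {y : ℕ} :
    y ∈ D H i ↔ (2 ≤ y ∧ y < n) ∧ T H i 0 1 y := by
  simp [D]

lemma mem_G {n : ℕ} {H : Finset (Finset (ZMod n))} {i : ZMod n} {p : ℕ × ℕ} :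
    p ∈ G H i ↔ ((2 ≤ p.1 ∧ p.1 < n) ∧ (2 ≤ p.2 ∧ p.2 < n)) ∧
      p.1 < p.2 ∧ T H i 0 p.1 p.2 ∧ T H i 1 p.1 p.2 := by
  simp [G]

lemma G_inter_aux {n : ℕ} {H : Finset (Finset (ZMod n))} (hH : ¬ HasM2 n H) (i : ZMod n)
    {p q : ℕ × ℕ} (hp : p ∈ G H i) (hq : q ∈ G H i) (hlt : p.1 < q.1) :
    p.2 = q.1 ∨ p.2 = q.2 := by
  by_contra! hne
  obtain ⟨hne1, hne2⟩ := hne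
  rw [mem_G] at hp hq
  obtain ⟨⟨⟨hp1, hp2⟩, hp3, hp4⟩, hp5, hp6, hp7⟩ := hp
  obtain ⟨⟨⟨hq1, hq2⟩, hq3, hq4⟩, hq5, hq6, hq7⟩ := hq
  rcases lt_or_gt_of_ne hne1 with h1 | h1
  · exact (free6 hH i (p := 0) (q := 1) (by omega) (by omega) hp5 h1 hq5 hq4).2.2.2.1 ⟨hp6, hq7⟩
  · rcases lt_or_gt_of_ne hne2 with h2 | h2
    · exact (free6 hH i (p := 0) (q := 1) (by omega) (by omega) hlt h1 h2 hq4).2.2.2.2.2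
        ⟨hq6, hp7⟩
    · exact (free6 hH i (p := 0) (q := 1) (by omega) (by omega) hlt hq5 h2 hp4).2.1
        ⟨hp6, hq7⟩

lemma G_inter {n : ℕ} {H : Finset (Finset (ZMod n))} (hH : ¬ HasM2 n H) (i : ZMod n)
    {p q : ℕ × ℕ} (hp : p ∈ G H i) (hq : q ∈ G H i) :
    p.1 = q.1 ∨ p.1 = q.2 ∨ p.2 = q.1 ∨ p.2 = q.2 := by
  rcases lt_trichotomy p.1 q.1 with h | h | h
  · rcases G_inter_aux hH i hp hq h with h | h <;> omega
  · exact Or.inl h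
  · rcases G_inter_aux hH i hq hp h with h | h <;> omega

lemma star_of_inter (S : Finset (ℕ × ℕ)) (hlt : ∀ p ∈ S, p.1 < p.2)
    (hint : ∀ p ∈ S, ∀ q ∈ S, p.1 = q.1 ∨ p.1 = q.2 ∨ p.2 = q.1 ∨ p.2 = q.2)
    (hc : 4 ≤ S.card) : ∃ c, ∀ p ∈ S, p.1 = c ∨ p.2 = c := by
  by_contra! hno
  obtain ⟨p, hp⟩ : S.Nonempty := by
    rw [← Finset.card_pos]; omega
  obtain ⟨q, hq, hq1, hq2⟩ := hno p.1
  obtain ⟨r, hr, hr1, hr2⟩ := hno p.2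
  have hsub : S ⊆ {p, q, r} := by
    intro s hs
    have e1 := hint s hs p hp
    have e2 := hint s hs q hq
    have e3 := hint s hs r hr
    have e4 := hint p hp q hq
    have e5 := hint p hp r hr
    have e6 := hint q hq r hr
    have l1 := hlt s hs
    have l2 := hlt p hp
    have l3 := hlt q hq
    have l4 := hlt r hr
    simp only [mem_insert, mem_singleton, Prod.ext_iff]
    omega
  have := Finset.card_le_card hsub
  have := Finset.card_le_three (a := p) (b := q) (c := r)
  omega

lemma leaves {n : ℕ} {H : Finset (Finset (ZMod n))} (hH : ¬ HasM2 n H) (i : ZMod n)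
    (hc : 4 ≤ (G H i).card) :
    ∃ (c : ℕ) (L : Finset ℕ), 2 ≤ c ∧ c < n ∧ L.card = (G H i).card ∧
      ∀ l ∈ L, 2 ≤ l ∧ l < n ∧ l ≠ c ∧ T H i 0 c l ∧ T H i 1 c l := by
  obtain ⟨c, hstar⟩ := star_of_inter (G H i) (fun p hp => (mem_G.1 hp).2.1)
    (fun p hp q hq => G_inter hH i hp hq) hc
  refine ⟨c, (G H i).image (fun p => if p.1 = c then p.2 else p.1), ?_, ?_, ?_, ?_⟩
  · obtain ⟨p, hp⟩ : (G H i).Nonempty := by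
      rw [← Finset.card_pos]; omega
    have := hstar p hp
    rw [mem_G] at hp
    omega
  · obtain ⟨p, hp⟩ : (G H i).Nonempty := by
      rw [← Finset.card_pos]; omega
    have := hstar p hp
    rw [mem_G] at hp
    omega
  · apply Finset.card_image_of_injOn
    intro p hp q hq hpq
    have h1 := hstar p hp
    have h2 := hstar q hq
    have h3 := (mem_G.1 hp).2.1
    have h4 := (mem_G.1 hq).2.1
    simp only at hpq
    rw [Prod.ext_iff]
    split_ifs at hpq <;> omega
  · intro l hl
    rw [mem_image] at hl
    obtain ⟨p, hp, rfl⟩ := hl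
    have h1 := hstar p hp
    rw [mem_G] at hp
    obtain ⟨⟨⟨hp1, hp2⟩, hp3, hp4⟩, hp5, hp6, hp7⟩ := hp
    split_ifs with h
    · subst h
      exact ⟨hp3, hp4, by omega, hp6, hp7⟩
    · have h' : p.2 = c := by omega
      subst h'
      exact ⟨hp1, hp2, by omega, (T_swap23 _ _ _ _ _).1 hp6, (T_swap23 _ _ _ _ _).1 hp7⟩

lemma exists_other (L : Finset ℕ) (hL : 4 ≤ L.card) (a b c : ℕ) :
    ∃ l ∈ L, l ≠ a ∧ l ≠ b ∧ l ≠ c := by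
  obtain ⟨l, hl, hl'⟩ := Finset.exists_mem_notMem_of_card_lt_card
    (s := {a, b, c}) (t := L) (by
      have := Finset.card_le_three (a := a) (b := b) (c := c)
      omega)
  simp only [mem_insert, mem_singleton, not_or] at hl'
  exact ⟨l, hl, hl'⟩

lemma side1 {n : ℕ} {H : Finset (Finset (ZMod n))} (hH : ¬ HasM2 n H) (i : ZMod n)
    (c : ℕ) (L : Finset ℕ) (hc : 4 ≤ c) (hcn : c < n) (hL : 4 ≤ L.card)
    (hLT : ∀ l ∈ L, 2 ≤ l ∧ l < n ∧ l ≠ c ∧ T H i 0 c l ∧ T H i 1 c l) :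
    (D H (i + ((c - 2 : ℕ) : ZMod n))).card + L.card ≤ n - 1 := by
  obtain ⟨j, rfl⟩ : ∃ j, c = j + 2 := ⟨c - 2, by omega⟩
  rw [Nat.add_sub_cancel]
  set Y := (D H (i + (j : ZMod n))).image (fun y => if j + y < n then j + y else j + y - n)
    with hY
  have hYc : Y.card = (D H (i + (j : ZMod n))).card := by
    apply Finset.card_image_of_injOn
    intro p hp q hq hpq
    have h1 := (mem_D.1 hp).1
    have h2 := (mem_D.1 hq).1
    simp only at hpq
    split_ifs at hpq <;> omega
  have hYT : ∀ y ∈ Y, y < n ∧ y ≠ j ∧ y ≠ j + 1 ∧ T H i j (j + 1) y := by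
    intro y hy
    rw [hY, mem_image] at hy
    obtain ⟨z, hz, rfl⟩ := hy
    rw [mem_D, T_shift] at hz
    obtain ⟨hz1, hz2⟩ := hz
    split_ifs with h
    · exact ⟨h, by omega, by omega, hz2⟩
    · refine ⟨by omega, by omega, by omega, ?_⟩
      rw [← T_per]
      have : n + (j + z - n) = j + z := by omega
      rw [this]
      exact hz2
  have hA : ∀ y ∈ Y, 1 ≤ y ∧ y ≤ j + 2 := by
    intro y hy
    obtain ⟨hy1, hy2, hy3, hy4⟩ := hYT y hy
    have hy5 : T H i y j (j + 1) := by
      rw [T_swap12, T_swap23]; exact hy4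
    by_contra hcon
    obtain ⟨l, hl, hlj, hlj1, hly⟩ := exists_other L hL j (j + 1) y
    obtain ⟨hl2, hln, hlc, -, hT⟩ := hLT l hl
    have hT' : T H i 1 l (j + 2) := (T_swap23 _ _ _ _ _).1 hT
    rcases Nat.eq_zero_or_pos y with h0 | h0
    · subst h0
      rcases Nat.lt_or_ge l (j + 2) with h | h
      · exact (free6 hH i (p := 0) (q := 1) (r := l) (s := j) (t := j + 1) (u := j + 2)
          (by omega) (by omega) (by omega) (by omega) (by omega) (by omega)).2.2.1 ⟨hy5, hT'⟩
      · exact (free6 hH i (p := 0) (q := 1) (r := j) (s := j + 1) (t := j + 2) (u := l)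
          (by omega) (by omega) (by omega) (by omega) (by omega) (by omega)).2.2.2.1 ⟨hy5, hT⟩
    · rcases Nat.lt_or_ge l (j + 2) with h | h
      · exact (free6 hH i (p := 1) (q := l) (r := j) (s := j + 1) (t := j + 2) (u := y)
          (by omega) (by omega) (by omega) (by omega) (by omega) (by omega)).2.2.2.2.1 ⟨hT', hy4⟩
      · rcases Nat.lt_or_ge l y with h' | h'
        · exact (free6 hH i (p := 1) (q := j) (r := j + 1) (s := j + 2) (t := l) (u := y)
            (by omega) (by omega) (by omega) (by omega) (by omega) (by omega)).2.2.1 ⟨hT, hy4⟩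
        · exact (free6 hH i (p := 1) (q := j) (r := j + 1) (s := j + 2) (t := y) (u := l)
            (by omega) (by omega) (by omega) (by omega) (by omega) (by omega)).2.2.2.2.2
            ⟨hT, hy4⟩
  have hB : ∀ y ∈ Y, ∀ l ∈ L, l < j → l ≤ y := by
    intro y hy l hl hlj
    obtain ⟨hy1, hy2, hy3, hy4⟩ := hYT y hy
    have hy6 := hA y hy
    have hy5 : T H i y j (j + 1) := by
      rw [T_swap12, T_swap23]; exact hy4
    obtain ⟨hl2, hln, hlc, hT, -⟩ := hLT l hl
    have hT' : T H i 0 l (j + 2) := (T_swap23 _ _ _ _ _).1 hT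
    by_contra hcon
    exact (free6 hH i (p := 0) (q := y) (r := l) (s := j) (t := j + 1) (u := j + 2)
      (by omega) (by omega) (by omega) (by omega) (by omega) (by omega)).2.1 ⟨hT', hy5⟩
  obtain ⟨l0, hl01, hl02, hl03, hl04⟩ : ∃ l0, 1 ≤ l0 ∧ l0 < j ∧ (∀ l ∈ L, l < j → l ≤ l0) ∧
      (∀ y ∈ Y, l0 ≤ y) := by
    have hne : (insert 1 (L.filter (· < j))).Nonempty := insert_nonempty _ _
    refine ⟨(insert 1 (L.filter (· < j))).max' hne, ?_, ?_, ?_, ?_⟩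
    · exact Finset.le_max' _ _ (mem_insert_self _ _)
    · rw [Finset.max'_lt_iff]
      intro y hy
      rw [mem_insert, mem_filter] at hy
      omega
    · intro l hl hlj
      exact Finset.le_max' _ _ (mem_insert_of_mem (mem_filter.2 ⟨hl, hlj⟩))
    · intro y hy
      apply Finset.max'_le
      intro z hz
      rw [mem_insert, mem_filter] at hz
      rcases hz with rfl | ⟨hz1, hz2⟩
      · exact (hA y hy).1
      · exact hB y hy z hz1 hz2
  have hYs : Y ⊆ Ico l0 j ∪ {j + 2} := by
    intro y hy
    have h1 := hYT y hy
    have h2 := hA y hy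
    have h3 := hl04 y hy
    rw [mem_union, mem_Ico, mem_singleton]
    omega
  have hLs : L ⊆ (Ico 2 (l0 + 1) ∪ Ico j (j + 2)) ∪ Ico (j + 3) n := by
    intro l hl
    have h1 := hLT l hl
    have h2 := hl03 l hl
    rw [mem_union, mem_union, mem_Ico, mem_Ico, mem_Ico]
    omega
  have c1 := (Finset.card_le_card hYs).trans (Finset.card_union_le _ _)
  have c2 := (Finset.card_le_card hLs).trans (Finset.card_union_le _ _)
  have c3 := Finset.card_union_le (Ico 2 (l0 + 1)) (Ico j (j + 2))
  simp only [Nat.card_Ico, card_singleton] at c1 c2 c3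
  omega

lemma side2 {n : ℕ} {H : Finset (Finset (ZMod n))} (hH : ¬ HasM2 n H) (i : ZMod n)
    (c : ℕ) (L : Finset ℕ) (hc : 2 ≤ c) (hcn : c + 2 < n) (hL : 4 ≤ L.card)
    (hLT : ∀ l ∈ L, 2 ≤ l ∧ l < n ∧ l ≠ c ∧ T H i 0 c l ∧ T H i 1 c l) :
    (D H (i + ((c + 1 : ℕ) : ZMod n))).card + L.card ≤ n - 1 := by
  set Y := (D H (i + ((c + 1 : ℕ) : ZMod n))).image
    (fun y => if c + 1 + y ≤ n then c + 1 + y else c + 1 + y - n) with hY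
  have hYc : Y.card = (D H (i + ((c + 1 : ℕ) : ZMod n))).card := by
    apply Finset.card_image_of_injOn
    intro p hp q hq hpq
    have h1 := (mem_D.1 hp).1
    have h2 := (mem_D.1 hq).1
    simp only at hpq
    split_ifs at hpq <;> omega
  have hYT : ∀ y ∈ Y, 1 ≤ y ∧ y ≤ n ∧ y ≠ c + 1 ∧ y ≠ c + 2 ∧ T H i (c + 1) (c + 2) y := by
    intro y hy
    rw [hY, mem_image] at hy
    obtain ⟨z, hz, rfl⟩ := hy
    rw [mem_D, T_shift] at hz
    obtain ⟨hz1, hz2⟩ := hz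
    split_ifs with h
    · exact ⟨by omega, h, by omega, by omega, hz2⟩
    · refine ⟨by omega, by omega, by omega, by omega, ?_⟩
      rw [← T_per]
      have : n + (c + 1 + z - n) = c + 1 + z := by omega
      rw [this]
      exact hz2
  have hA : ∀ y ∈ Y, c ≤ y := by
    intro y hy
    obtain ⟨hy0, hy1, hy2, hy3, hy4⟩ := hYT y hy
    have hy5 : T H i y (c + 1) (c + 2) := by
      rw [T_swap12, T_swap23]; exact hy4
    by_contra hcon
    obtain ⟨l, hl, hlj, hlj1, hly⟩ := exists_other L hL (c + 1) (c + 2) y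
    obtain ⟨hl2, hln, hlc, hT, -⟩ := hLT l hl
    have hT' : T H i 0 l c := (T_swap23 _ _ _ _ _).1 hT
    rcases Nat.lt_or_ge l c with h | h
    · rcases Nat.lt_or_ge l y with h' | h'
      · exact (free6 hH i (p := 0) (q := l) (r := y) (s := c) (t := c + 1) (u := c + 2)
          (by omega) (by omega) (by omega) (by omega) (by omega) (by omega)).1 ⟨hT', hy5⟩
      · exact (free6 hH i (p := 0) (q := y) (r := l) (s := c) (t := c + 1) (u := c + 2)
          (by omega) (by omega) (by omega) (by omega) (by omega) (by omega)).2.2.2.1 ⟨hT', hy5⟩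
    · exact (free6 hH i (p := 0) (q := y) (r := c) (s := c + 1) (t := c + 2) (u := l)
        (by omega) (by omega) (by omega) (by omega) (by omega) (by omega)).2.1 ⟨hT, hy5⟩
  have hB : ∀ y ∈ Y, ∀ l ∈ L, c + 2 < l → y ≤ l := by
    intro y hy l hl hlj
    obtain ⟨hy0, hy1, hy2, hy3, hy4⟩ := hYT y hy
    obtain ⟨hl2, hln, hlc, -, hT⟩ := hLT l hl
    by_contra hcon
    rcases Nat.eq_or_lt_of_le hy1 with h | h
    · subst h
      have hy5 : T H i 0 (c + 1) (c + 2) := by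
        rw [T_swap12, T_swap23, ← T_per]; exact hy4
      exact (free6 hH i (p := 0) (q := 1) (r := c) (s := c + 1) (t := c + 2) (u := l)
        (by omega) (by omega) (by omega) (by omega) (by omega) (by omega)).2.2.1 ⟨hy5, hT⟩
    · exact (free6 hH i (p := 1) (q := c) (r := c + 1) (s := c + 2) (t := l) (u := y)
        (by omega) (by omega) (by omega) (by omega) (by omega) (by omega)).2.2.2.2.1 ⟨hT, hy4⟩
  obtain ⟨l0, hl01, hl02, hl03, hl04⟩ : ∃ l0, l0 ≤ n ∧ c + 2 < l0 ∧
      (∀ l ∈ L, c + 2 < l → l0 ≤ l) ∧ (∀ y ∈ Y, y ≤ l0) := by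
    have hne : (insert n (L.filter (c + 2 < ·))).Nonempty := insert_nonempty _ _
    refine ⟨(insert n (L.filter (c + 2 < ·))).min' hne, ?_, ?_, ?_, ?_⟩
    · exact Finset.min'_le _ _ (mem_insert_self _ _)
    · rw [Finset.lt_min'_iff]
      intro y hy
      rw [mem_insert, mem_filter] at hy
      omega
    · intro l hl hlj
      exact Finset.min'_le _ _ (mem_insert_of_mem (mem_filter.2 ⟨hl, hlj⟩))
    · intro y hy
      apply Finset.le_min'
      intro z hz
      rw [mem_insert, mem_filter] at hz
      rcases hz with rfl | ⟨hz1, hz2⟩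
      · exact (hYT y hy).2.1
      · exact hB y hy z hz1 hz2
  have hYs : Y ⊆ Ico (c + 3) (l0 + 1) ∪ {c} := by
    intro y hy
    have h1 := hYT y hy
    have h2 := hA y hy
    have h3 := hl04 y hy
    rw [mem_union, mem_Ico, mem_singleton]
    omega
  have hLs : L ⊆ (Ico 2 c ∪ Ico (c + 1) (c + 3)) ∪ Ico l0 n := by
    intro l hl
    have h1 := hLT l hl
    have h2 := hl03 l hl
    rw [mem_union, mem_union, mem_Ico, mem_Ico, mem_Ico]
    omega
  have c1 := (Finset.card_le_card hYs).trans (Finset.card_union_le _ _)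
  have c2 := (Finset.card_le_card hLs).trans (Finset.card_union_le _ _)
  have c3 := Finset.card_union_le (Ico 2 c) (Ico (c + 1) (c + 3))
  simp only [Nat.card_Ico, card_singleton] at c1 c2 c3
  omega

lemma D_large {n : ℕ} {H : Finset (Finset (ZMod n))} {i : ZMod n} (hn : 8 ≤ n)
    (h : n - 3 ≤ (D H i).card) : 4 ∈ D H i ∨ 5 ∈ D H i := by
  by_contra! hno
  have hsub : D H i ⊆ ((Ico 2 n).erase 4).erase 5 := by
    intro y hy
    have h1 := (mem_D.1 hy).1
    rw [mem_erase, mem_erase, mem_Ico]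
    refine ⟨?_, ?_, h1⟩
    · rintro rfl; exact hno.2 hy
    · rintro rfl; exact hno.1 hy
  have := Finset.card_le_card hsub
  rw [card_erase_of_mem, card_erase_of_mem, Nat.card_Ico] at this
  · omega
  · rw [mem_Ico]; omega
  · rw [mem_erase, mem_Ico]; omega

lemma exists_light {n : ℕ} {H : Finset (Finset (ZMod n))} (hH : ¬ HasM2 n H) (hn : 8 ≤ n) :
    ∃ i : ZMod n, (D H i).card + (G H i).card ≤ n - 1 := by
  have : NeZero n := ⟨by omega⟩
  by_contra! hno
  obtain ⟨i, hi⟩ := Finite.exists_max (fun i : ZMod n => (G H i).card)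
  by_cases h4 : 4 ≤ (G H i).card
  · obtain ⟨c, L, hc, hcn, hLc, hLT⟩ := leaves hH i h4
    by_cases hc4 : 4 ≤ c
    · have h1 := side1 hH i c L hc4 hcn (by omega) hLT
      have h2 := hno (i + ((c - 2 : ℕ) : ZMod n))
      have h3 := hi (i + ((c - 2 : ℕ) : ZMod n))
      omega
    · have h1 := side2 hH i c L hc (by omega) (by omega) hLT
      have h2 := hno (i + ((c + 1 : ℕ) : ZMod n))
      have h3 := hi (i + ((c + 1 : ℕ) : ZMod n))
      omega
  · have hD : ∀ k, n - 3 ≤ (D H k).card := by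
      intro k
      have h1 := hno k
      have h2 := hi k
      omega
    obtain ⟨x, hx, hx'⟩ : ∃ x, (x = 4 ∨ x = 5) ∧ T H i 0 1 x := by
      rcases D_large hn (hD i) with h | h
      · exact ⟨4, Or.inl rfl, (mem_D.1 h).2⟩
      · exact ⟨5, Or.inr rfl, (mem_D.1 h).2⟩
    obtain ⟨y, hy, hy'⟩ : ∃ y, (y = 6 ∨ y = 7) ∧ T H i 2 3 y := by
      rcases D_large hn (hD (i + (2 : ℕ))) with h | h
      · exact ⟨6, Or.inl rfl, (T_shift _ _ _ _ _ _).1 (mem_D.1 h).2⟩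
      · exact ⟨7, Or.inr rfl, (T_shift _ _ _ _ _ _).1 (mem_D.1 h).2⟩
    exact (free6 hH i (p := 0) (q := 1) (r := 2) (s := 3) (t := x) (u := y)
      (by omega) (by omega) (by omega) (by omega) (by omega) (by omega)).2.2.2.2.1 ⟨hx', hy'⟩

end M2
namespace M2
open Finset

/-! ### base case -/

open Classical in
/-- indicator of a triple -/
noncomputable def X {n : ℕ} (H : Finset (Finset (ZMod n))) (a b c : ℕ) : ℕ :=
  if T H 0 a b c then 1 else 0

lemma X_le {n : ℕ} (H : Finset (Finset (ZMod n))) (a b c : ℕ) : X H a b c ≤ 1 := by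
  unfold X; split_ifs <;> omega

lemma X_conf {n : ℕ} {H : Finset (Finset (ZMod n))} {a b c d e f : ℕ}
    (h : ¬ (T H 0 a b c ∧ T H 0 d e f)) : X H a b c + X H d e f ≤ 1 := by
  unfold X; split_ifs <;> first | omega | (exfalso; tauto)

lemma sorted_triple {n : ℕ} [NeZero n] (e : Finset (ZMod n)) (he : e.card = 3) :
    ∃ a b c : ℕ, a < b ∧ b < c ∧ c < n ∧ e = {(a : ZMod n), (b : ZMod n), (c : ZMod n)} := by
  have key : ∀ x y z : ZMod n, x.val < y.val → y.val < z.val → e = {x, y, z} →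
      ∃ a b c : ℕ, a < b ∧ b < c ∧ c < n ∧ e = {(a : ZMod n), (b : ZMod n), (c : ZMod n)} := by
    intro x y z h1 h2 h
    refine ⟨x.val, y.val, z.val, h1, h2, ZMod.val_lt z, ?_⟩
    simpa only [ZMod.natCast_zmod_val] using h
  obtain ⟨x, y, z, hxy, hxz, hyz, rfl⟩ := Finset.card_eq_three.1 he
  have h1 : x.val ≠ y.val := fun h => hxy (ZMod.val_injective n h)
  have h2 : x.val ≠ z.val := fun h => hxz (ZMod.val_injective n h)
  have h3 : y.val ≠ z.val := fun h => hyz (ZMod.val_injective n h)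
  rcases lt_or_gt_of_ne h1 with h1 | h1 <;> rcases lt_or_gt_of_ne h2 with h2 | h2 <;>
    rcases lt_or_gt_of_ne h3 with h3 | h3
  · exact key x y z h1 h3 rfl
  · exact key x z y h2 h3 (by ext w; simp only [mem_insert, mem_singleton]; tauto)
  · omega
  · exact key z x y h2 h1 (by ext w; simp only [mem_insert, mem_singleton]; tauto)
  · exact key y x z h1 h2 (by ext w; simp only [mem_insert, mem_singleton]; tauto)
  · omega
  · exact key y z x h3 h2 (by ext w; simp only [mem_insert, mem_singleton]; tauto)
  · exact key z y x h3 h1 (by ext w; simp only [mem_insert, mem_singleton]; tauto)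

lemma card_le_sum {n : ℕ} [NeZero n] (H : Finset (Finset (ZMod n))) (hH : IsCgh n H) :
    H.card ≤ ∑ p ∈ (range n ×ˢ (range n ×ˢ range n)),
      if p.1 < p.2.1 ∧ p.2.1 < p.2.2 then X H p.1 p.2.1 p.2.2 else 0 := by
  classical
  have hsub : H ⊆ ((range n ×ˢ (range n ×ˢ range n)).filter
      (fun p => (p.1 < p.2.1 ∧ p.2.1 < p.2.2) ∧ T H 0 p.1 p.2.1 p.2.2)).image
      (fun p => {(p.1 : ZMod n), (p.2.1 : ZMod n), (p.2.2 : ZMod n)}) := by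
    intro e he
    obtain ⟨a, b, c, hab, hbc, hc, rfl⟩ := sorted_triple e (hH e he)
    rw [mem_image]
    refine ⟨(a, b, c), ?_, rfl⟩
    simp only [mem_filter, mem_product, mem_range, T, zero_add]
    exact ⟨⟨by omega, by omega, by omega⟩, ⟨hab, hbc⟩, he⟩
  refine (card_le_card hsub).trans (card_image_le.trans ?_)
  rw [card_filter]
  apply Finset.sum_le_sum
  intro p _
  unfold X
  split_ifs <;> first | omega | (exfalso; tauto)

lemma seven {a b c d e f g : ℕ} (h1 : a + b ≤ 1) (h2 : b + c ≤ 1) (h3 : c + d ≤ 1)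
    (h4 : d + e ≤ 1) (h5 : e + f ≤ 1) (h6 : f + g ≤ 1) (h7 : g + a ≤ 1) :
    a + b + c + d + e + f + g ≤ 3 := by
  omega

lemma base7 (H : Finset (Finset (ZMod 7))) (hH : IsCgh 7 H) (hM : ¬ HasM2 7 H) :
    H.card ≤ 19 := by
  have h := card_le_sum H hH
  simp [Finset.sum_product, Finset.sum_range_succ] at h
  have F := fun p q r s t u h1 h2 h3 h4 h5 h6 =>
    free6 hM 0 (p := p) (q := q) (r := r) (s := s) (t := t) (u := u) h1 h2 h3 h4 h5 h6
  have c013_245 : X H 0 1 3 + X H 2 4 5 ≤ 1 :=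
    X_conf (F 0 1 2 3 4 5 (by omega) (by omega) (by omega) (by omega) (by omega) (by omega)).1
  have c136_245 : X H 1 3 6 + X H 2 4 5 ≤ 1 :=
    X_conf (F 1 2 3 4 5 6 (by omega) (by omega) (by omega) (by omega) (by omega) (by omega)).2.1
  have c045_136 : X H 0 4 5 + X H 1 3 6 ≤ 1 :=
    X_conf (F 0 1 3 4 5 6 (by omega) (by omega) (by omega) (by omega) (by omega) (by omega)).2.2.1
  have c045_236 : X H 0 4 5 + X H 2 3 6 ≤ 1 :=
    X_conf (F 0 2 3 4 5 6 (by omega) (by omega) (by omega) (by omega) (by omega) (by omega)).2.2.1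
  have c015_236 : X H 0 1 5 + X H 2 3 6 ≤ 1 :=
    X_conf (F 0 1 2 3 5 6 (by omega) (by omega) (by omega) (by omega) (by omega) (by omega)).2.2.2.2.1
  have c015_246 : X H 0 1 5 + X H 2 4 6 ≤ 1 :=
    X_conf (F 0 1 2 4 5 6 (by omega) (by omega) (by omega) (by omega) (by omega) (by omega)).2.2.2.2.1
  have c013_246 : X H 0 1 3 + X H 2 4 6 ≤ 1 :=
    X_conf (F 0 1 2 3 4 6 (by omega) (by omega) (by omega) (by omega) (by omega) (by omega)).1
  have c124_356 : X H 1 2 4 + X H 3 5 6 ≤ 1 :=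
    X_conf (F 1 2 3 4 5 6 (by omega) (by omega) (by omega) (by omega) (by omega) (by omega)).1
  have c024_356 : X H 0 2 4 + X H 3 5 6 ≤ 1 :=
    X_conf (F 0 2 3 4 5 6 (by omega) (by omega) (by omega) (by omega) (by omega) (by omega)).1
  have c024_156 : X H 0 2 4 + X H 1 5 6 ≤ 1 :=
    X_conf (F 0 1 2 4 5 6 (by omega) (by omega) (by omega) (by omega) (by omega) (by omega)).2.2.2.1
  have c034_156 : X H 0 3 4 + X H 1 5 6 ≤ 1 :=
    X_conf (F 0 1 3 4 5 6 (by omega) (by omega) (by omega) (by omega) (by omega) (by omega)).2.2.2.1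
  have c034_126 : X H 0 3 4 + X H 1 2 6 ≤ 1 :=
    X_conf (F 0 1 2 3 4 6 (by omega) (by omega) (by omega) (by omega) (by omega) (by omega)).2.2.1
  have c035_126 : X H 0 3 5 + X H 1 2 6 ≤ 1 :=
    X_conf (F 0 1 2 3 5 6 (by omega) (by omega) (by omega) (by omega) (by omega) (by omega)).2.2.1
  have c035_124 : X H 0 3 5 + X H 1 2 4 ≤ 1 :=
    X_conf (F 0 1 2 3 4 5 (by omega) (by omega) (by omega) (by omega) (by omega) (by omega)).2.2.2.2.2
  have c046_235 : X H 0 4 6 + X H 2 3 5 ≤ 1 :=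
    X_conf (F 0 2 3 4 5 6 (by omega) (by omega) (by omega) (by omega) (by omega) (by omega)).2.2.2.2.2
  have c046_135 : X H 0 4 6 + X H 1 3 5 ≤ 1 :=
    X_conf (F 0 1 3 4 5 6 (by omega) (by omega) (by omega) (by omega) (by omega) (by omega)).2.2.2.2.2
  have c026_135 : X H 0 2 6 + X H 1 3 5 ≤ 1 :=
    X_conf (F 0 1 2 3 5 6 (by omega) (by omega) (by omega) (by omega) (by omega) (by omega)).2.1
  have c026_145 : X H 0 2 6 + X H 1 4 5 ≤ 1 :=
    X_conf (F 0 1 2 4 5 6 (by omega) (by omega) (by omega) (by omega) (by omega) (by omega)).2.1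
  have c023_145 : X H 0 2 3 + X H 1 4 5 ≤ 1 :=
    X_conf (F 0 1 2 3 4 5 (by omega) (by omega) (by omega) (by omega) (by omega) (by omega)).2.2.2.1
  have c023_146 : X H 0 2 3 + X H 1 4 6 ≤ 1 :=
    X_conf (F 0 1 2 3 4 6 (by omega) (by omega) (by omega) (by omega) (by omega) (by omega)).2.2.2.1
  have c146_235 : X H 1 4 6 + X H 2 3 5 ≤ 1 :=
    X_conf (F 1 2 3 4 5 6 (by omega) (by omega) (by omega) (by omega) (by omega) (by omega)).2.2.2.2.2
  have c015_346 : X H 0 1 5 + X H 3 4 6 ≤ 1 :=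
    X_conf (F 0 1 3 4 5 6 (by omega) (by omega) (by omega) (by omega) (by omega) (by omega)).2.2.2.2.1
  have c013_256 : X H 0 1 3 + X H 2 5 6 ≤ 1 :=
    X_conf (F 0 1 2 3 5 6 (by omega) (by omega) (by omega) (by omega) (by omega) (by omega)).1
  have c134_256 : X H 1 3 4 + X H 2 5 6 ≤ 1 :=
    X_conf (F 1 2 3 4 5 6 (by omega) (by omega) (by omega) (by omega) (by omega) (by omega)).2.2.2.1
  have c025_134 : X H 0 2 5 + X H 1 3 4 ≤ 1 :=
    X_conf (F 0 1 2 3 4 5 (by omega) (by omega) (by omega) (by omega) (by omega) (by omega)).2.1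
  have c025_346 : X H 0 2 5 + X H 3 4 6 ≤ 1 :=
    X_conf (F 0 2 3 4 5 6 (by omega) (by omega) (by omega) (by omega) (by omega) (by omega)).2.2.2.2.1
  have c045_126 : X H 0 4 5 + X H 1 2 6 ≤ 1 :=
    X_conf (F 0 1 2 4 5 6 (by omega) (by omega) (by omega) (by omega) (by omega) (by omega)).2.2.1
  have c036_124 : X H 0 3 6 + X H 1 2 4 ≤ 1 :=
    X_conf (F 0 1 2 3 4 6 (by omega) (by omega) (by omega) (by omega) (by omega) (by omega)).2.2.2.2.2
  have c036_245 : X H 0 3 6 + X H 2 4 5 ≤ 1 :=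
    X_conf (F 0 2 3 4 5 6 (by omega) (by omega) (by omega) (by omega) (by omega) (by omega)).2.1
  have c023_156 : X H 0 2 3 + X H 1 5 6 ≤ 1 :=
    X_conf (F 0 1 2 3 5 6 (by omega) (by omega) (by omega) (by omega) (by omega) (by omega)).2.2.2.1
  have c014_235 : X H 0 1 4 + X H 2 3 5 ≤ 1 :=
    X_conf (F 0 1 2 3 4 5 (by omega) (by omega) (by omega) (by omega) (by omega) (by omega)).2.2.2.2.1
  have c014_356 : X H 0 1 4 + X H 3 5 6 ≤ 1 :=
    X_conf (F 0 1 3 4 5 6 (by omega) (by omega) (by omega) (by omega) (by omega) (by omega)).1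
  have c026_134 : X H 0 2 6 + X H 1 3 4 ≤ 1 :=
    X_conf (F 0 1 2 3 4 6 (by omega) (by omega) (by omega) (by omega) (by omega) (by omega)).2.1
  have c125_346 : X H 1 2 5 + X H 3 4 6 ≤ 1 :=
    X_conf (F 1 2 3 4 5 6 (by omega) (by omega) (by omega) (by omega) (by omega) (by omega)).2.2.2.2.1
  have c046_125 : X H 0 4 6 + X H 1 2 5 ≤ 1 :=
    X_conf (F 0 1 2 4 5 6 (by omega) (by omega) (by omega) (by omega) (by omega) (by omega)).2.2.2.2.2
  have c014_236 : X H 0 1 4 + X H 2 3 6 ≤ 1 :=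
    X_conf (F 0 1 2 3 4 6 (by omega) (by omega) (by omega) (by omega) (by omega) (by omega)).2.2.2.2.1
  have c145_236 : X H 1 4 5 + X H 2 3 6 ≤ 1 :=
    X_conf (F 1 2 3 4 5 6 (by omega) (by omega) (by omega) (by omega) (by omega) (by omega)).2.2.1
  have c036_145 : X H 0 3 6 + X H 1 4 5 ≤ 1 :=
    X_conf (F 0 1 3 4 5 6 (by omega) (by omega) (by omega) (by omega) (by omega) (by omega)).2.1
  have c036_125 : X H 0 3 6 + X H 1 2 5 ≤ 1 :=
    X_conf (F 0 1 2 3 5 6 (by omega) (by omega) (by omega) (by omega) (by omega) (by omega)).2.2.2.2.2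
  have c034_125 : X H 0 3 4 + X H 1 2 5 ≤ 1 :=
    X_conf (F 0 1 2 3 4 5 (by omega) (by omega) (by omega) (by omega) (by omega) (by omega)).2.2.1
  have c034_256 : X H 0 3 4 + X H 2 5 6 ≤ 1 :=
    X_conf (F 0 2 3 4 5 6 (by omega) (by omega) (by omega) (by omega) (by omega) (by omega)).2.2.2.1
  have c014_256 : X H 0 1 4 + X H 2 5 6 ≤ 1 :=
    X_conf (F 0 1 2 4 5 6 (by omega) (by omega) (by omega) (by omega) (by omega) (by omega)).1
  have k0 : X H 0 1 3 + X H 2 4 5 + X H 1 3 6 + X H 0 4 5 + X H 2 3 6 + X H 0 1 5 + X H 2 4 6 ≤ 3 := by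
    exact seven c013_245 (by rw [add_comm]; exact c136_245) (by rw [add_comm]; exact c045_136) c045_236 (by rw [add_comm]; exact c015_236) c015_246 (by rw [add_comm]; exact c013_246)
  have k1 : X H 1 2 4 + X H 3 5 6 + X H 0 2 4 + X H 1 5 6 + X H 0 3 4 + X H 1 2 6 + X H 0 3 5 ≤ 3 := by
    exact seven c124_356 (by rw [add_comm]; exact c024_356) c024_156 (by rw [add_comm]; exact c034_156) c034_126 (by rw [add_comm]; exact c035_126) c035_124
  have k2 : X H 2 3 5 + X H 0 4 6 + X H 1 3 5 + X H 0 2 6 + X H 1 4 5 + X H 0 2 3 + X H 1 4 6 ≤ 3 := by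
    exact seven (by rw [add_comm]; exact c046_235) c046_135 (by rw [add_comm]; exact c026_135) c026_145 (by rw [add_comm]; exact c023_145) c023_146 c146_235
  have k3 : X H 3 4 6 + X H 0 1 5 + X H 2 4 6 + X H 0 1 3 + X H 2 5 6 + X H 1 3 4 + X H 0 2 5 ≤ 3 := by
    exact seven (by rw [add_comm]; exact c015_346) c015_246 (by rw [add_comm]; exact c013_246) c013_256 (by rw [add_comm]; exact c134_256) (by rw [add_comm]; exact c025_134) c025_346
  have k4 : X H 0 4 5 + X H 1 2 6 + X H 0 3 5 + X H 1 2 4 + X H 0 3 6 + X H 2 4 5 + X H 1 3 6 ≤ 3 := by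
    exact seven c045_126 (by rw [add_comm]; exact c035_126) c035_124 (by rw [add_comm]; exact c036_124) c036_245 (by rw [add_comm]; exact c136_245) (by rw [add_comm]; exact c045_136)
  have k5 : X H 1 5 6 + X H 0 2 3 + X H 1 4 6 + X H 2 3 5 + X H 0 1 4 + X H 3 5 6 + X H 0 2 4 ≤ 3 := by
    exact seven (by rw [add_comm]; exact c023_156) c023_146 c146_235 (by rw [add_comm]; exact c014_235) c014_356 (by rw [add_comm]; exact c024_356) c024_156
  have k6 : X H 0 2 6 + X H 1 3 4 + X H 0 2 5 + X H 3 4 6 + X H 1 2 5 + X H 0 4 6 + X H 1 3 5 ≤ 3 := by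
    exact seven c026_134 (by rw [add_comm]; exact c025_134) c025_346 (by rw [add_comm]; exact c125_346) (by rw [add_comm]; exact c046_125) c046_135 (by rw [add_comm]; exact c026_135)
  have k7 : X H 0 1 4 + X H 2 3 6 + X H 1 4 5 + X H 0 3 6 + X H 1 2 5 + X H 0 3 4 + X H 2 5 6 ≤ 3 := by
    exact seven c014_236 (by rw [add_comm]; exact c145_236) (by rw [add_comm]; exact c036_145) c036_125 (by rw [add_comm]; exact c034_125) c034_256 (by rw [add_comm]; exact c014_256)
  have := X_le H 0 1 2
  have := X_le H 0 1 6
  have := X_le H 0 5 6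
  have := X_le H 1 2 3
  have := X_le H 2 3 4
  have := X_le H 3 4 5
  have := X_le H 4 5 6
  clear c013_245 c136_245 c045_136 c045_236 c015_236 c015_246 c013_246 c124_356 c024_356 c024_156 c034_156 c034_126 c035_126 c035_124 c046_235 c046_135 c026_135 c026_145 c023_145 c023_146 c146_235 c015_346 c013_256 c134_256 c025_134 c025_346 c045_126 c036_124 c036_245 c023_156 c014_235 c014_356 c026_134 c125_346 c046_125 c014_236 c145_236 c036_145 c036_125 c034_125 c034_256 c014_256
  omega

end M2
namespace M2
open Finset

/-! ### contraction -/

lemma eq_of_image_eq {α β : Type*} [DecidableEq β] (f : α → β) (e e' : Finset α)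
    (hinj : ∀ x ∈ e, ∀ y ∈ e', f x = f y → x = y) (h : e.image f = e'.image f) : e = e' := by
  ext x
  constructor
  · intro hx
    have : f x ∈ e'.image f := h ▸ mem_image_of_mem f hx
    obtain ⟨y, hy, hxy⟩ := mem_image.1 this
    rw [hinj x hx y hy hxy.symm]; exact hy
  · intro hy
    have : f x ∈ e.image f := h ▸ mem_image_of_mem f hy
    obtain ⟨y, hy', hxy⟩ := mem_image.1 this
    rw [← hinj y hy' x hy hxy]; exact hy'

/-- the contraction of `i` and `i+1` -/
def ctr {m : ℕ} (i : ZMod (m + 1)) (x : ZMod (m + 1)) : ZMod m :=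
  ((min (x - (i + 2)).val (m - 1) : ℕ) : ZMod m)

lemma ctr_val {m : ℕ} (hm : 2 ≤ m) (i x : ZMod (m + 1)) :
    (ctr i x).val = min (x - (i + 2)).val (m - 1) := by
  unfold ctr
  exact ZMod.val_cast_of_lt (by omega)

lemma val_i {m : ℕ} (hm : 2 ≤ m) (i : ZMod (m + 1)) : (i - (i + 2)).val = m - 1 := by
  have h : i - (i + 2) = ((m - 1 : ℕ) : ZMod (m + 1)) := by
    have h1 : ((m - 1 : ℕ) : ZMod (m + 1)) + 2 = 0 := by
      have : ((m - 1 : ℕ) : ZMod (m + 1)) + 2 = ((m + 1 : ℕ) : ZMod (m + 1)) := by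
        rw [← Nat.cast_two, ← Nat.cast_add]
        congr 1
        omega
      rw [this, ZMod.natCast_self]
    linear_combination -h1
  rw [h]
  exact ZMod.val_cast_of_lt (by omega)

lemma val_i1 {m : ℕ} (i : ZMod (m + 1)) : (i + 1 - (i + 2)).val = m := by
  have h : i + 1 - (i + 2) = ((m : ℕ) : ZMod (m + 1)) := by
    have h1 : ((m + 1 : ℕ) : ZMod (m + 1)) = 0 := ZMod.natCast_self _
    push_cast at h1
    linear_combination -h1
  rw [h]
  exact ZMod.val_cast_of_lt (by omega)

lemma val_sub_inj {m : ℕ} {t x y : ZMod (m + 1)} (h : (x - t).val = (y - t).val) : x = y := by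
  have := ZMod.val_injective (m + 1) h
  linear_combination this

lemma ctr_eq {m : ℕ} (hm : 2 ≤ m) (i x y : ZMod (m + 1)) (h : ctr i x = ctr i y) :
    x = y ∨ (x = i ∧ y = i + 1) ∨ (x = i + 1 ∧ y = i) := by
  have h1 := congrArg ZMod.val h
  rw [ctr_val hm, ctr_val hm] at h1
  have hx := ZMod.val_lt (x - (i + 2))
  have hy := ZMod.val_lt (y - (i + 2))
  have e1 := val_i hm i
  have e2 := val_i1 i
  have hc : (x - (i + 2)).val = (y - (i + 2)).val ∨
    ((x - (i + 2)).val = (i - (i + 2)).val ∧ (y - (i + 2)).val = (i + 1 - (i + 2)).val) ∨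
    ((x - (i + 2)).val = (i + 1 - (i + 2)).val ∧ (y - (i + 2)).val = (i - (i + 2)).val) := by
    omega
  rcases hc with h | ⟨h, h'⟩ | ⟨h, h'⟩
  · exact Or.inl (val_sub_inj h)
  · exact Or.inr (Or.inl ⟨val_sub_inj h, val_sub_inj h'⟩)
  · exact Or.inr (Or.inr ⟨val_sub_inj h, val_sub_inj h'⟩)

lemma ctr_i {m : ℕ} (hm : 2 ≤ m) (i : ZMod (m + 1)) : ctr i i = ctr i (i + 1) := by
  unfold ctr
  rw [val_i hm, val_i1]
  congr 1
  omega

lemma cw_lift {m : ℕ} (hm : 2 ≤ m) (i a b c d e f : ZMod (m + 1))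
    (h : CWList m [ctr i a, ctr i b, ctr i c, ctr i d, ctr i e, ctr i f]) :
    CWList (m + 1) [a, b, c, d, e, f] := by
  have : NeZero m := ⟨by omega⟩
  rw [← cw6_add (-(i + 2))]
  rw [cw6_sorted] at h ⊢
  simp only [ctr_val hm] at h
  simp only [neg_add_eq_sub]
  have k : ∀ u v : ℕ, min u (m - 1) < min v (m - 1) → u < v := by omega
  rcases h with ⟨h1, h2, h3, h4, h5⟩ | ⟨h1, h2, h3, h4, h5⟩ | ⟨h1, h2, h3, h4, h5⟩ |
    ⟨h1, h2, h3, h4, h5⟩ | ⟨h1, h2, h3, h4, h5⟩ | ⟨h1, h2, h3, h4, h5⟩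
  · exact Or.inl ⟨k _ _ h1, k _ _ h2, k _ _ h3, k _ _ h4, k _ _ h5⟩
  · exact Or.inr (Or.inl ⟨k _ _ h1, k _ _ h2, k _ _ h3, k _ _ h4, k _ _ h5⟩)
  · exact Or.inr (Or.inr (Or.inl ⟨k _ _ h1, k _ _ h2, k _ _ h3, k _ _ h4, k _ _ h5⟩))
  · exact Or.inr (Or.inr (Or.inr (Or.inl ⟨k _ _ h1, k _ _ h2, k _ _ h3, k _ _ h4, k _ _ h5⟩)))
  · exact Or.inr (Or.inr (Or.inr (Or.inr
      (Or.inl ⟨k _ _ h1, k _ _ h2, k _ _ h3, k _ _ h4, k _ _ h5⟩))))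
  · exact Or.inr (Or.inr (Or.inr (Or.inr
      (Or.inr ⟨k _ _ h1, k _ _ h2, k _ _ h3, k _ _ h4, k _ _ h5⟩))))

lemma lift_triple {m : ℕ} (i : ZMod (m + 1)) (e : Finset (ZMod (m + 1))) (he : e.card = 3)
    (a b c : ZMod m) (hab : a ≠ b) (hac : a ≠ c) (hbc : b ≠ c) (h : e.image (ctr i) = {a, b, c}) :
    ∃ x y z, e = {x, y, z} ∧ ctr i x = a ∧ ctr i y = b ∧ ctr i z = c := by
  have ha : a ∈ e.image (ctr i) := by rw [h]; simp
  have hb : b ∈ e.image (ctr i) := by rw [h]; simp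
  have hc : c ∈ e.image (ctr i) := by rw [h]; simp
  obtain ⟨x, hx, rfl⟩ := mem_image.1 ha
  obtain ⟨y, hy, rfl⟩ := mem_image.1 hb
  obtain ⟨z, hz, rfl⟩ := mem_image.1 hc
  refine ⟨x, y, z, ?_, rfl, rfl, rfl⟩
  symm
  apply Finset.eq_of_subset_of_card_le
  · intro w hw
    simp only [mem_insert, mem_singleton] at hw
    rcases hw with rfl | rfl | rfl <;> assumption
  · rw [he, Finset.card_eq_three.2 ⟨x, y, z, ?_, ?_, ?_, rfl⟩]
    · rintro rfl; exact hab rfl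
    · rintro rfl; exact hac rfl
    · rintro rfl; exact hbc rfl

lemma exists_offset {n : ℕ} [NeZero n] (i z : ZMod n) : ∃ y : ℕ, y < n ∧ z = i + (y : ZMod n) :=
  ⟨(z - i).val, ZMod.val_lt _, by rw [ZMod.natCast_zmod_val]; ring⟩

lemma R1_card {n : ℕ} [NeZero n] (H : Finset (Finset (ZMod n))) (hH : IsCgh n H)
    (hn : 2 ≤ n) (i : ZMod n) :
    (H.filter (fun e => i ∈ e ∧ i + 1 ∈ e)).card ≤ (D H i).card := by
  have hsub : H.filter (fun e => i ∈ e ∧ i + 1 ∈ e) ⊆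
      (D H i).image (fun y : ℕ => {i + ((0 : ℕ) : ZMod n), i + ((1 : ℕ) : ZMod n), i + (y : ZMod n)}) := by
    intro e he
    rw [mem_filter] at he
    obtain ⟨he, hi, hi1⟩ := he
    have h3 := hH e he
    have hne : i ≠ i + 1 := by
      have : Fact (1 < n) := ⟨by omega⟩
      simp
    obtain ⟨z, hz⟩ : ((e.erase i).erase (i + 1)).Nonempty := by
      rw [← card_pos, card_erase_of_mem (mem_erase.2 ⟨hne.symm, hi1⟩), card_erase_of_mem hi]
      omega
    simp only [mem_erase] at hz
    obtain ⟨hz1, hz2, hz3⟩ := hz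
    have hez : {i, i + 1, z} = e := by
      apply Finset.eq_of_subset_of_card_le
      · intro w hw
        simp only [mem_insert, mem_singleton] at hw
        rcases hw with rfl | rfl | rfl <;> assumption
      · rw [h3, Finset.card_eq_three.2 ⟨i, i + 1, z, hne, hz2.symm, hz1.symm, rfl⟩]
    obtain ⟨y, hy, rfl⟩ := exists_offset i z
    rw [mem_image]
    refine ⟨y, ?_, by simpa using hez⟩
    rw [mem_D]
    refine ⟨⟨?_, hy⟩, ?_⟩
    · by_contra hlt
      have : y = 0 ∨ y = 1 := by omega
      rcases this with rfl | rfl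
      · simp at hz2
      · simp at hz1
    · unfold T
      have : ({i + ((0 : ℕ) : ZMod n), i + ((1 : ℕ) : ZMod n), i + (y : ZMod n)} : Finset (ZMod n)) = e := by
        simpa using hez
      rw [this]; exact he
  exact (card_le_card hsub).trans card_image_le

lemma R2_card {n : ℕ} [NeZero n] (H : Finset (Finset (ZMod n))) (hH : IsCgh n H)
    (i : ZMod n) :
    (H.filter (fun e => (i ∉ e ∧ i + 1 ∈ e) ∧ insert i (e.erase (i + 1)) ∈ H)).card
      ≤ (G H i).card := by
  have hsub : H.filter (fun e => (i ∉ e ∧ i + 1 ∈ e) ∧ insert i (e.erase (i + 1)) ∈ H) ⊆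
      (G H i).image (fun p : ℕ × ℕ =>
        {i + ((1 : ℕ) : ZMod n), i + (p.1 : ZMod n), i + (p.2 : ZMod n)}) := by
    intro e he
    rw [mem_filter] at he
    obtain ⟨he, ⟨hi, hi1⟩, hsw⟩ := he
    have h3 := hH e he
    obtain ⟨z, w, hzw, hE⟩ : ∃ z w, z ≠ w ∧ e.erase (i + 1) = {z, w} := by
      rw [← card_eq_two, card_erase_of_mem hi1]; omega
    have hee : e = {i + 1, z, w} := by
      rw [← hE, insert_erase hi1]
    obtain ⟨a, ha, rfl⟩ := exists_offset i z
    obtain ⟨b, hb, rfl⟩ := exists_offset i w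
    have key : ∀ a b : ℕ, a < b → b < n → e.erase (i + 1) = {i + (a : ZMod n), i + (b : ZMod n)} →
        e = {i + 1, i + (a : ZMod n), i + (b : ZMod n)} →
        e ∈ (G H i).image (fun p : ℕ × ℕ =>
        {i + ((1 : ℕ) : ZMod n), i + (p.1 : ZMod n), i + (p.2 : ZMod n)}) := by
      intro a b hab hb hE hee
      have ha2 : i + (a : ZMod n) ∈ e.erase (i + 1) := by rw [hE]; simp
      have hb2 : i + (b : ZMod n) ∈ e.erase (i + 1) := by rw [hE]; simp
      rw [mem_erase] at ha2 hb2
      have h2 : ∀ c : ℕ, i + (c : ZMod n) ≠ i + 1 ∧ i + (c : ZMod n) ∈ e → 2 ≤ c := by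
        intro c hc
        by_contra hlt
        have : c = 0 ∨ c = 1 := by omega
        rcases this with rfl | rfl
        · apply hi; simpa using hc.2
        · apply hc.1; simp
      rw [mem_image]
      refine ⟨(a, b), ?_, by simpa using hee.symm⟩
      rw [mem_G]
      refine ⟨⟨⟨h2 a ha2, by simp only; omega⟩, h2 b hb2, hb⟩, hab, ?_, ?_⟩
      · unfold T
        rw [hE] at hsw
        simpa using hsw
      · unfold T
        rw [hee] at he
        simpa using he
    rcases lt_trichotomy a b with h | h | h
    · exact key a b h hb hE hee
    · subst h; exact absurd rfl hzw
    · exact key b a h ha (by rw [hE, pair_comm]) (by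
        rw [hee]; rw [pair_comm (i + (a : ZMod n))])
  exact (card_le_card hsub).trans card_image_le

lemma contract {m : ℕ} (hm : 2 ≤ m) (H : Finset (Finset (ZMod (m + 1))))
    (hH : IsCgh (m + 1) H) (hM : ¬ HasM2 (m + 1) H) (i : ZMod (m + 1)) :
    ∃ H' : Finset (Finset (ZMod m)), IsCgh m H' ∧ ¬ HasM2 m H' ∧
      H.card ≤ H'.card + (D H i).card + (G H i).card := by
  have hinst : NeZero m := ⟨by omega⟩
  refine ⟨(H.filter (fun e => ¬ (i ∈ e ∧ i + 1 ∈ e))).image (fun e => e.image (ctr i)), ?_, ?_, ?_⟩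
  · intro e' he'
    rw [mem_image] at he'
    obtain ⟨e, he, rfl⟩ := he'
    rw [mem_filter] at he
    rw [card_image_of_injOn, hH e he.1]
    intro x hx y hy hxy
    rcases ctr_eq hm i x y hxy with h | ⟨rfl, rfl⟩ | ⟨rfl, rfl⟩
    · exact h
    · exact absurd ⟨hx, hy⟩ he.2
    · exact absurd ⟨hy, hx⟩ he.2
  · rintro ⟨a₁, a₂, a₃, b₁, b₂, b₃, hcw, hA0, hB0⟩
    obtain ⟨A, hA, hA'⟩ := mem_image.1 hA0
    obtain ⟨B, hB, hB'⟩ := mem_image.1 hB0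
    rw [mem_filter] at hA hB
    have hs := (cw6_sorted _ _ _ _ _ _).1 hcw
    obtain ⟨x, y, z, hxyz, rfl, rfl, rfl⟩ := lift_triple i A (hH A hA.1) a₁ a₂ a₃
      (by rintro rfl; omega) (by rintro rfl; omega) (by rintro rfl; omega) hA'
    obtain ⟨x', y', z', hxyz', rfl, rfl, rfl⟩ := lift_triple i B (hH B hB.1) b₁ b₂ b₃
      (by rintro rfl; omega) (by rintro rfl; omega) (by rintro rfl; omega) hB'
    refine hM ⟨x, y, z, x', y', z', cw_lift hm i _ _ _ _ _ _ hcw, ?_, ?_⟩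
    · rw [← hxyz]; exact hA.1
    · rw [← hxyz']; exact hB.1
  · have r1 := R1_card H hH (by omega) i
    have r2 := R2_card H hH i
    set R1 := H.filter (fun e => i ∈ e ∧ i + 1 ∈ e) with hR1
    set R2 := H.filter (fun e => (i ∉ e ∧ i + 1 ∈ e) ∧ insert i (e.erase (i + 1)) ∈ H) with hR2
    have hinj : ((H \ R1) \ R2).card ≤
        ((H.filter (fun e => ¬ (i ∈ e ∧ i + 1 ∈ e))).image (fun e => e.image (ctr i))).card := by
      apply card_le_card_of_injOn (fun e => e.image (ctr i))
      · intro e he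
        simp only [coe_sdiff, Set.mem_sdiff, mem_coe, hR1, mem_filter] at he
        apply mem_image_of_mem
        rw [mem_filter]
        tauto
      · have key : ∀ e ∈ H, ∀ e' ∈ H, e ∉ R1 → e ∉ R2 → i + 1 ∈ e → i + 1 ∉ e' →
            e.image (ctr i) = e'.image (ctr i) → False := by
          intro e he e' he' h1 h2 hi hi' him
          have hie : i ∉ e := by
            intro h; apply h1; rw [hR1, mem_filter]; exact ⟨he, h, hi⟩
          apply h2
          rw [hR2, mem_filter]
          refine ⟨he, ⟨hie, hi⟩, ?_⟩
          have : insert i (e.erase (i + 1)) = e' := by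
            apply eq_of_image_eq (ctr i)
            · intro x hx y hy hxy
              rcases ctr_eq hm i x y hxy with h | ⟨rfl, rfl⟩ | ⟨rfl, rfl⟩
              · exact h
              · exact absurd hy hi'
              · rw [mem_insert, mem_erase] at hx
                rcases hx with h | h
                · exact h
                · exact absurd rfl h.1
            · rw [← him, image_insert, ctr_i hm, ← image_insert, insert_erase hi]
          rw [this]; exact he'
        intro e he e' he' him
        simp only [coe_sdiff, Set.mem_sdiff, mem_coe] at he he'
        simp only at him
        obtain ⟨⟨he, h1⟩, h2⟩ := he
        obtain ⟨⟨he', h1'⟩, h2'⟩ := he'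
        by_cases hi : i + 1 ∈ e <;> by_cases hi' : i + 1 ∈ e'
        · have hie : i ∉ e := by
            intro h; apply h1; rw [hR1, mem_filter]; exact ⟨he, h, hi⟩
          have hie' : i ∉ e' := by
            intro h; apply h1'; rw [hR1, mem_filter]; exact ⟨he', h, hi'⟩
          apply eq_of_image_eq (ctr i) _ _ _ him
          intro x hx y hy hxy
          rcases ctr_eq hm i x y hxy with h | ⟨rfl, rfl⟩ | ⟨rfl, rfl⟩
          · exact h
          · exact absurd hx hie
          · exact absurd hy hie'
        · exact (key e he e' he' h1 h2 hi hi' him).elim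
        · exact (key e' he' e he h1' h2' hi' hi him.symm).elim
        · apply eq_of_image_eq (ctr i) _ _ _ him
          intro x hx y hy hxy
          rcases ctr_eq hm i x y hxy with h | ⟨rfl, rfl⟩ | ⟨rfl, rfl⟩
          · exact h
          · exact absurd hy hi'
          · exact absurd hx hi
    have c1 := Finset.le_card_sdiff R1 H
    have c2 := Finset.le_card_sdiff R2 (H \ R1)
    omega

end M2
namespace M2
open Finset

/-! ### lower bound -/

/-- triples through `0` -/
def starH (n : ℕ) [NeZero n] : Finset (Finset (ZMod n)) :=
  (powersetCard 2 ((univ : Finset (ZMod n)).erase 0)).image (insert 0)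

/-- consecutive triples avoiding `0` -/
def consH (n : ℕ) : Finset (Finset (ZMod n)) :=
  (Ico 1 (n - 2)).image (fun x : ℕ =>
    {(x : ZMod n), ((x + 1 : ℕ) : ZMod n), ((x + 2 : ℕ) : ZMod n)})

lemma starH_card (n : ℕ) [NeZero n] : (starH n).card = (n - 1).choose 2 := by
  unfold starH
  rw [card_image_of_injOn, card_powersetCard, card_erase_of_mem (mem_univ _), card_univ, ZMod.card]
  intro e he e' he' h
  simp only [mem_coe, mem_powersetCard] at he he'
  have h1 : (0 : ZMod n) ∉ e := fun h0 => by simpa using he.1 h0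
  have h2 : (0 : ZMod n) ∉ e' := fun h0 => by simpa using he'.1 h0
  rw [← erase_insert h1, ← erase_insert h2]
  rw [h]

lemma cast_eq {n a b : ℕ} (ha : a < n) (hb : b < n) (h : (a : ZMod n) = (b : ZMod n)) : a = b := by
  have := congrArg ZMod.val h
  rwa [ZMod.val_cast_of_lt ha, ZMod.val_cast_of_lt hb] at this

lemma consH_card (n : ℕ) : (consH n).card = n - 3 := by
  unfold consH
  have key : ∀ x y : ℕ, x < n - 2 → y < n - 2 →
      ({(x : ZMod n), ((x + 1 : ℕ) : ZMod n), ((x + 2 : ℕ) : ZMod n)} : Finset (ZMod n)) =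
        {(y : ZMod n), ((y + 1 : ℕ) : ZMod n), ((y + 2 : ℕ) : ZMod n)} → y ≤ x := by
    intro x y hx hy h
    have h1 : (x : ZMod n) ∈ ({(y : ZMod n), ((y + 1 : ℕ) : ZMod n), ((y + 2 : ℕ) : ZMod n)} :
        Finset (ZMod n)) := by rw [← h]; simp
    simp only [mem_insert, mem_singleton] at h1
    rcases h1 with h1 | h1 | h1
    · have := cast_eq (by omega) (by omega) h1; omega
    · have := cast_eq (by omega) (by omega) h1; omega
    · have := cast_eq (by omega) (by omega) h1; omega
  rw [card_image_of_injOn, Nat.card_Ico]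
  · omega
  · intro x hx y hy h
    simp only [coe_Ico, Set.mem_Ico] at hx hy
    exact le_antisymm (key y x (by omega) (by omega) h.symm) (key x y (by omega) (by omega) h)

lemma zero_mem_starH {n : ℕ} [NeZero n] {e : Finset (ZMod n)} (he : e ∈ starH n) : 0 ∈ e := by
  unfold starH at he
  obtain ⟨s, hs, rfl⟩ := mem_image.1 he
  exact mem_insert_self _ _

lemma zero_notMem_consH {n : ℕ} {e : Finset (ZMod n)} (he : e ∈ consH n) : 0 ∉ e := by
  unfold consH at he
  obtain ⟨x, hx, rfl⟩ := mem_image.1 he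
  rw [mem_Ico] at hx
  simp only [mem_insert, mem_singleton, not_or]
  rw [← Nat.cast_zero]
  refine ⟨?_, ?_, ?_⟩
  · intro h; have := cast_eq (by omega) (by omega) h; omega
  · intro h; have := cast_eq (by omega) (by omega) h; omega
  · intro h; have := cast_eq (by omega) (by omega) h; omega

lemma lower_cgh (n : ℕ) [NeZero n] : IsCgh n (starH n ∪ consH n) := by
  intro e he
  rw [mem_union] at he
  rcases he with he | he
  · unfold starH at he
    obtain ⟨s, hs, rfl⟩ := mem_image.1 he
    rw [mem_powersetCard] at hs
    rw [card_insert_of_notMem, hs.2]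
    intro h0
    simpa using hs.1 h0
  · unfold consH at he
    obtain ⟨x, hx, rfl⟩ := mem_image.1 he
    rw [mem_Ico] at hx
    refine Finset.card_eq_three.2 ⟨_, _, _, ?_, ?_, ?_, rfl⟩
    · intro h; have := cast_eq (by omega) (by omega) h; omega
    · intro h; have := cast_eq (by omega) (by omega) h; omega
    · intro h; have := cast_eq (by omega) (by omega) h; omega

lemma lower_mem {n : ℕ} [NeZero n] {e : Finset (ZMod n)} (he : e ∈ starH n ∪ consH n) :
    0 ∈ e ∨ ∃ x, x ∈ e ∧ x + 1 ∈ e ∧ x + 1 + 1 ∈ e := by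
  rw [mem_union] at he
  rcases he with he | he
  · exact Or.inl (zero_mem_starH he)
  · right
    unfold consH at he
    obtain ⟨x, hx, rfl⟩ := mem_image.1 he
    refine ⟨(x : ZMod n), ?_, ?_, ?_⟩
    · simp
    · simp
    · simp [add_assoc, one_add_one_eq_two]

lemma succ_val {n : ℕ} [NeZero n] (hn : 2 ≤ n) (x a : ZMod n) :
    (x + 1 - a).val = if (x - a).val + 1 < n then (x - a).val + 1 else 0 := by
  have h : x + 1 - a = (x - a) + 1 := by ring
  have : Fact (1 < n) := ⟨by omega⟩
  have h2 := ZMod.val_lt (x - a)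
  rw [h, ZMod.val_add, ZMod.val_one]
  split_ifs with h1
  · exact Nat.mod_eq_of_lt h1
  · have : (x - a).val + 1 = n := by omega
    rw [this, Nat.mod_self]

lemma lower_free (n : ℕ) [NeZero n] (hn : 2 ≤ n) : ¬ HasM2 n (starH n ∪ consH n) := by
  rintro ⟨a₁, a₂, a₃, b₁, b₂, b₃, hcw, hA, hB⟩
  rw [cw6] at hcw
  have hlt := ZMod.val_lt (b₃ - a₁)
  have memA : ∀ z ∈ ({a₁, a₂, a₃} : Finset (ZMod n)),
      (z - a₁).val = 0 ∨ (z - a₁).val = (a₂ - a₁).val ∨ (z - a₁).val = (a₃ - a₁).val := by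
    intro z hz
    simp only [mem_insert, mem_singleton] at hz
    rcases hz with rfl | rfl | rfl <;> simp
  have memB : ∀ z ∈ ({b₁, b₂, b₃} : Finset (ZMod n)),
      (z - a₁).val = (b₁ - a₁).val ∨ (z - a₁).val = (b₂ - a₁).val ∨
        (z - a₁).val = (b₃ - a₁).val := by
    intro z hz
    simp only [mem_insert, mem_singleton] at hz
    rcases hz with rfl | rfl | rfl <;> simp
  have zA : (0 : ZMod n) ∈ ({a₁, a₂, a₃} : Finset (ZMod n)) := by
    rcases lower_mem hA with h | ⟨x, h0, h1, h2⟩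
    · exact h
    · exfalso
      have m0 := memA _ h0
      have m1 := memA _ h1
      have m2 := memA _ h2
      have s1 := succ_val hn x a₁
      have s2 := succ_val hn (x + 1) a₁
      split_ifs at s1 s2 <;> omega
  have zB : (0 : ZMod n) ∈ ({b₁, b₂, b₃} : Finset (ZMod n)) := by
    rcases lower_mem hB with h | ⟨x, h0, h1, h2⟩
    · exact h
    · exfalso
      have m0 := memB _ h0
      have m1 := memB _ h1
      have m2 := memB _ h2
      have s1 := succ_val hn x a₁
      have s2 := succ_val hn (x + 1) a₁
      split_ifs at s1 s2 <;> omega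
  have m1 := memA _ zA
  have m2 := memB _ zB
  omega

lemma lower_card (n : ℕ) [NeZero n] (hn : 3 ≤ n) :
    (starH n ∪ consH n).card = n.choose 2 - 2 := by
  rw [card_union_of_disjoint, starH_card, consH_card]
  · obtain ⟨m, rfl⟩ : ∃ m, n = m + 1 := ⟨n - 1, by omega⟩
    have h : (m + 1).choose 2 = m + m.choose 2 := by
      rw [Nat.choose_succ_succ' m 1, Nat.choose_one_right]
    rw [h, Nat.add_sub_cancel]
    omega
  · rw [disjoint_left]
    intro e h1 h2
    exact zero_notMem_consH h2 (zero_mem_starH h1)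

lemma upper (n : ℕ) (hn : 7 ≤ n) : ∀ H : Finset (Finset (ZMod n)), IsCgh n H → ¬ HasM2 n H →
    H.card ≤ n.choose 2 - 2 := by
  induction n, hn using Nat.le_induction with
  | base =>
    intro H hH hM
    exact base7 H hH hM
  | succ m hm ih =>
    intro H hH hM
    obtain ⟨i, hi⟩ := exists_light hM (by omega)
    obtain ⟨H', h1, h2, h3⟩ := contract (by omega) H hH hM i
    have h4 := ih H' h1 h2
    have h : (m + 1).choose 2 = m + m.choose 2 := by
      rw [Nat.choose_succ_succ' m 1, Nat.choose_one_right]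
    have h5 : 2 ≤ m.choose 2 := by
      have := Nat.choose_le_choose 2 hm
      have h7 : Nat.choose 7 2 = 21 := rfl
      omega
    omega

end M2

theorem ex_M2 (n : ℕ) (hn : 7 ≤ n) :
    IsGreatest {m : ℕ | ∃ H : Finset (Finset (ZMod n)),
        IsCgh n H ∧ ¬ HasM2 n H ∧ H.card = m}
      (n.choose 2 - 2) := by
  have : NeZero n := ⟨by omega⟩
  constructor
  · exact ⟨M2.starH n ∪ M2.consH n, M2.lower_cgh n, M2.lower_free n (by omega),
      M2.lower_card n (by omega)⟩
  · rintro m ⟨H, hH, hM, rfl⟩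
    exact M2.upper n hn H hH hM
end

section
/- There exists a constant C > 0 such that for every integer n ≥ 3, every S_2-free cgh on Ω_n has at most (23/64)·n² + C·n triples; that is, ex_circ(n, S_2) ≤ 23n²/64 + O(n). -/
/-- `H` contains a copy of the configuration `S₂`: two triples sharing exactly
the vertex `v`, with the five vertices in clockwise cyclic order `v, b₁, a₁, a₂, b₂`. -/
def HasS2 (n : ℕ) (H : Finset (Finset (ZMod n))) : Prop :=
  ∃ v a₁ a₂ b₁ b₂ : ZMod n,
    CWList n [v, b₁, a₁, a₂, b₂] ∧
    ({v, a₁, a₂} : Finset (ZMod n)) ∈ H ∧ ({v, b₁, b₂} : Finset (ZMod n)) ∈ H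

namespace S2Proof

/-- `a, b, c` are distinct and occur in this clockwise cyclic order. -/
def Cw {n : ℕ} (a b c : ZMod n) : Prop :=
  (a.val < b.val ∧ b.val < c.val) ∨ (b.val < c.val ∧ c.val < a.val) ∨
    (c.val < a.val ∧ a.val < b.val)

lemma val_sub_eq {n : ℕ} [NeZero n] (a b : ZMod n) :
    (a.val ≤ b.val ∧ (b - a).val + a.val = b.val) ∨
      (b.val < a.val ∧ (b - a).val + a.val = n + b.val) := by
  rcases le_or_gt a.val b.val with h | h
  · left
    refine ⟨h, ?_⟩
    rw [ZMod.val_sub h]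
    omega
  · right
    refine ⟨h, ?_⟩
    have h1 := ZMod.val_add_val_of_le (a := b - a) (b := a)
    have hb := ZMod.val_lt b
    by_cases hle : n ≤ (b - a).val + a.val
    · have := h1 hle
      rw [sub_add_cancel] at this
      omega
    · have := ZMod.val_add_of_lt (a := b - a) (b := a) (by omega)
      rw [sub_add_cancel] at this
      omega

lemma cw_list {n : ℕ} [NeZero n] {v b1 a1 a2 b2 : ZMod n} (h1 : Cw v b1 a1) (h2 : Cw v a1 a2)
    (h3 : Cw v a2 b2) : CWList n [v, b1, a1, a2, b2] := by
  have e1 := val_sub_eq v b1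
  have e2 := val_sub_eq v a1
  have e3 := val_sub_eq v a2
  have e4 := val_sub_eq v b2
  have l0 := ZMod.val_lt v
  have l1 := ZMod.val_lt b1
  have l2 := ZMod.val_lt a1
  have l3 := ZMod.val_lt a2
  have l4 := ZMod.val_lt b2
  unfold Cw at h1 h2 h3
  have k1 : 0 < (b1 - v).val := by omega
  have k2 : (b1 - v).val < (a1 - v).val := by omega
  have k3 : (a1 - v).val < (a2 - v).val := by omega
  have k4 : (a2 - v).val < (b2 - v).val := by omega
  change List.IsChain (· < ·) [0, (b1 - v).val, (a1 - v).val, (a2 - v).val, (b2 - v).val]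
  exact .cons_cons k1 (.cons_cons k2 (.cons_cons k3 (.cons_cons k4 (.singleton _))))

variable {n : ℕ} {H : Finset (Finset (ZMod n))}

lemma noS2 [NeZero n] (hS : ¬ HasS2 n H) {v a1 a2 b1 b2 : ZMod n} (h1 : Cw v b1 a1)
    (h2 : Cw v a1 a2) (h3 : Cw v a2 b2) (ha : ({v, a1, a2} : Finset (ZMod n)) ∈ H)
    (hb : ({v, b1, b2} : Finset (ZMod n)) ∈ H) : False :=
  hS ⟨v, a1, a2, b1, b2, cw_list h1 h2 h3, ha, hb⟩

lemma Cw.rot {a b c : ZMod n} (h : Cw a b c) : Cw b c a := by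
  unfold Cw at *; omega

lemma set_rot (a b c : ZMod n) : ({a, b, c} : Finset (ZMod n)) = {b, c, a} := by
  ext x; simp; tauto

lemma set_swap (a b c : ZMod n) : ({a, b, c} : Finset (ZMod n)) = {a, c, b} := by
  ext x; simp; tauto

lemma ne_val [NeZero n] {a b : ZMod n} (h : a ≠ b) : a.val ≠ b.val :=
  fun h' => h (ZMod.val_injective n h')

/-- The directed pair `(p, q)` has a triple on the arc from `q` to `p`. -/
def NE (H : Finset (Finset (ZMod n))) (p q : ZMod n) : Prop :=
  ∃ z, Cw p q z ∧ ({p, q, z} : Finset (ZMod n)) ∈ H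

lemma key [NeZero n] (hS : ¬ HasS2 n H) {p q v : ZMod n} (h : Cw p q v)
    (h1 : NE H p q) (h2 : NE H q v) (h3 : NE H v p) :
    ({p, q, v} : Finset (ZMod n)) ∈ H := by
  by_contra hn
  obtain ⟨z, cz, ez⟩ := h1
  obtain ⟨y, cy, ey⟩ := h2
  obtain ⟨x, cx, ex⟩ := h3
  have nz : z.val ≠ v.val := ne_val (by rintro rfl; exact hn ez)
  have ny : y.val ≠ p.val := ne_val (by rintro rfl; rw [← set_rot] at ey; exact hn ey)
  have nx : x.val ≠ q.val := ne_val (by rintro rfl; rw [set_rot] at ex; exact hn ex)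
  have ez' : ({q, z, p} : Finset (ZMod n)) ∈ H := by rwa [← set_rot]
  have ey' : ({v, y, q} : Finset (ZMod n)) ∈ H := by rwa [← set_rot]
  have ex' : ({p, x, v} : Finset (ZMod n)) ∈ H := by rwa [← set_rot]
  have hz : Cw q z v ∨ Cw v z p := by unfold Cw at *; omega
  have hy : Cw p y q ∨ Cw v y p := by unfold Cw at *; omega
  have hx : Cw p x q ∨ Cw q x v := by unfold Cw at *; omega
  rcases hz with hz | hz
  · rcases hx with hx | hx
    · exact noS2 hS (v := p) (b1 := x) (a1 := q) (a2 := z) (b2 := v)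
        (by unfold Cw at *; omega) (by unfold Cw at *; omega) (by unfold Cw at *; omega) ez ex'
    rcases hy with hy | hy
    · exact noS2 hS (v := v) (b1 := p) (a1 := y) (a2 := q) (b2 := x)
        (by unfold Cw at *; omega) (by unfold Cw at *; omega) (by unfold Cw at *; omega) ey' ex
    · exact noS2 hS (v := q) (b1 := z) (a1 := v) (a2 := y) (b2 := p)
        (by unfold Cw at *; omega) (by unfold Cw at *; omega) (by unfold Cw at *; omega) ey ez'
  · rcases hy with hy | hy
    · exact noS2 hS (v := q) (b1 := v) (a1 := z) (a2 := p) (b2 := y)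
        (by unfold Cw at *; omega) (by unfold Cw at *; omega) (by unfold Cw at *; omega) ez' ey
    rcases hx with hx | hx
    · exact noS2 hS (v := v) (b1 := y) (a1 := p) (a2 := x) (b2 := q)
        (by unfold Cw at *; omega) (by unfold Cw at *; omega) (by unfold Cw at *; omega) ex ey'
    · exact noS2 hS (v := p) (b1 := q) (a1 := x) (a2 := v) (b2 := z)
        (by unfold Cw at *; omega) (by unfold Cw at *; omega) (by unfold Cw at *; omega) ex' ez

/-- `c` is the first third vertex for the directed pair `(a, b)`. -/
def First (H : Finset (Finset (ZMod n))) (t : ZMod n × ZMod n × ZMod n) : Prop :=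
  ∀ z, Cw t.1 t.2.1 z → ({t.1, t.2.1, z} : Finset (ZMod n)) ∈ H → ¬ Cw t.1 z t.2.2

/-- At least one of two consecutive rotations is a first triple. -/
lemma first_or [NeZero n] (hS : ¬ HasS2 n H) {a b c : ZMod n} (h : Cw a b c) :
    First H (a, b, c) ∨ First H (c, a, b) := by
  by_contra hcon
  simp only [First, not_or, not_forall, not_not] at hcon
  obtain ⟨⟨z, hz, ez, hz'⟩, y, hy, ey, hy'⟩ := hcon
  rw [set_rot] at ey
  rw [set_swap] at ey
  rw [set_swap] at ey
  exact noS2 hS (v := a) (b1 := y) (a1 := b) (a2 := z) (b2 := c)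
    (by unfold Cw at *; omega) (by unfold Cw at *; omega) (by unfold Cw at *; omega) ez
    (by rwa [set_swap] at ey ⊢ <;> rwa [set_swap] at ey)

open Classical in
/-- all clockwise triples -/
noncomputable def CW (n : ℕ) [NeZero n] : Finset (ZMod n × ZMod n × ZMod n) :=
  Finset.univ.filter fun t => Cw t.1 t.2.1 t.2.2

open Classical in
/-- clockwise orderings of the triples of `H` -/
noncomputable def TT [NeZero n] (H : Finset (Finset (ZMod n))) :
    Finset (ZMod n × ZMod n × ZMod n) :=
  (CW n).filter fun t => ({t.1, t.2.1, t.2.2} : Finset (ZMod n)) ∈ H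

/-- rotation -/
def rho (t : ZMod n × ZMod n × ZMod n) : ZMod n × ZMod n × ZMod n := (t.2.1, t.2.2, t.1)

lemma sum_rho_CW [NeZero n] (f : ZMod n × ZMod n × ZMod n → ℕ) :
    ∑ t ∈ CW n, f (rho t) = ∑ t ∈ CW n, f t := by
  refine Finset.sum_nbij' rho (fun t => rho (rho t)) ?_ ?_ ?_ ?_ ?_
  · intro t ht
    simp only [CW, Finset.mem_filter, Finset.mem_univ, true_and, rho] at *
    exact ht.rot
  · intro t ht
    simp only [CW, Finset.mem_filter, Finset.mem_univ, true_and, rho] at *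
    exact ht.rot.rot
  · intros; rfl
  · intros; rfl
  · intros; rfl

lemma sum_rho_TT [NeZero n] (f : ZMod n × ZMod n × ZMod n → ℕ) :
    ∑ t ∈ TT H, f (rho t) = ∑ t ∈ TT H, f t := by
  refine Finset.sum_nbij' rho (fun t => rho (rho t)) ?_ ?_ ?_ ?_ ?_
  · intro t ht
    simp only [TT, CW, Finset.mem_filter, Finset.mem_univ, true_and, rho] at *
    exact ⟨ht.1.rot, by rw [← set_rot]; exact ht.2⟩
  · intro t ht
    simp only [TT, CW, Finset.mem_filter, Finset.mem_univ, true_and, rho] at *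
    exact ⟨ht.1.rot.rot, by rw [set_rot]; exact ht.2⟩
  · intros; rfl
  · intros; rfl
  · intros; rfl

open Classical in
/-- The arc behind the pair `(a, b)`. -/
noncomputable def arc [NeZero n] (a b : ZMod n) : Finset (ZMod n) :=
  Finset.univ.filter fun v => Cw a b v

lemma arc_add [NeZero n] {a b c : ZMod n} (h : Cw a b c) :
    n ≤ (arc a b).card + (arc b c).card + 3 := by
  classical
  have hsub : (Finset.univ : Finset (ZMod n)) ⊆ (arc a b ∪ arc b c) ∪ {a, b, c} := by
    intro v _
    simp only [arc, Finset.mem_union, Finset.mem_filter, Finset.mem_univ, true_and,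
      Finset.mem_insert, Finset.mem_singleton]
    by_cases h1 : v = a
    · tauto
    by_cases h2 : v = b
    · tauto
    by_cases h3 : v = c
    · tauto
    left
    have := ne_val h1
    have := ne_val h2
    have := ne_val h3
    unfold Cw at *
    omega
  have h1 := Finset.card_le_card hsub
  have h2 := Finset.card_union_le (arc a b ∪ arc b c) {a, b, c}
  have h3 := Finset.card_union_le (arc a b) (arc b c)
  have h4 : ({a, b, c} : Finset (ZMod n)).card ≤ 3 := Finset.card_le_three
  rw [Finset.card_univ, ZMod.card] at h1
  omega

open Classical in
/-- weight of a first triple -/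
noncomputable def wt [NeZero n] (H : Finset (Finset (ZMod n)))
    (t : ZMod n × ZMod n × ZMod n) : ℕ :=
  if First H t then (arc t.1 t.2.1).card else 0

open Classical in
/-- indicator of a non-empty directed pair -/
noncomputable def ind (H : Finset (Finset (ZMod n)))
    (t : ZMod n × ZMod n × ZMod n) : ℕ :=
  if NE H t.1 t.2.1 then 1 else 0

lemma wt_lower [NeZero n] (hS : ¬ HasS2 n H) {a b c : ZMod n} (h : Cw a b c) :
    n ≤ wt H (a, b, c) + wt H (b, c, a) + wt H (c, a, b) + 3 := by
  have h1 := first_or hS h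
  have h2 := first_or hS h.rot
  have h3 := first_or hS h.rot.rot
  have a1 := arc_add h
  have a2 := arc_add h.rot
  have a3 := arc_add h.rot.rot
  unfold wt
  dsimp only
  split_ifs <;> first | omega | tauto

lemma wt_upper [NeZero n] : ∑ t ∈ TT H, wt H t ≤ ∑ t ∈ CW n, ind H t := by
  classical
  have e1 : ∑ t ∈ TT H, wt H t =
      (((TT H).filter fun t => First H t).sigma fun t => arc t.1 t.2.1).card := by
    rw [Finset.card_sigma, Finset.sum_filter]
    rfl
  have e2 : ∑ t ∈ CW n, ind H t = ((CW n).filter fun t => NE H t.1 t.2.1).card := by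
    rw [Finset.card_filter]
    rfl
  rw [e1, e2]
  refine Finset.card_le_card_of_injOn (fun s => (s.1.1, s.1.2.1, s.2)) ?_ ?_
  · rintro ⟨⟨a, b, c⟩, v⟩ hs
    simp only [TT, CW, arc, Finset.coe_sigma, Set.mem_sigma_iff, Finset.mem_coe,
      Finset.mem_filter, Finset.mem_univ, true_and] at hs ⊢
    exact ⟨hs.2, c, hs.1.1.1, hs.1.1.2⟩
  · rintro ⟨⟨a, b, c⟩, v⟩ hs ⟨⟨a', b', c'⟩, v'⟩ hs' heq
    simp only [TT, CW, arc, Finset.coe_sigma, Set.mem_sigma_iff, Finset.mem_coe,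
      Finset.mem_filter, Finset.mem_univ, true_and] at hs hs'
    simp only [Prod.mk.injEq] at heq
    obtain ⟨rfl, rfl, rfl⟩ := heq
    have hc : c = c' := by
      by_contra hne
      have h1 := hs.1.2 c' hs'.1.1.1 hs'.1.1.2
      have h2 := hs'.1.2 c hs.1.1.1 hs.1.1.2
      have h3 := hs.1.1.1
      have h4 := hs'.1.1.1
      have := ne_val hne
      dsimp only at h1 h2 h3 h4
      unfold Cw at *
      omega
    subst hc
    rfl

lemma ind_upper [NeZero n] (hS : ¬ HasS2 n H) :
    3 * ∑ t ∈ CW n, ind H t ≤ 2 * (CW n).card + (TT H).card := by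
  classical
  have r1 := sum_rho_CW (n := n) (ind H)
  have r2 := sum_rho_CW (n := n) (fun t => ind H (rho t))
  have e : 3 * ∑ t ∈ CW n, ind H t =
      ∑ t ∈ CW n, (ind H t + ind H (rho t) + ind H (rho (rho t))) := by
    rw [Finset.sum_add_distrib, Finset.sum_add_distrib]
    omega
  have e' : 2 * (CW n).card + (TT H).card =
      ∑ t ∈ CW n, (2 + if ({t.1, t.2.1, t.2.2} : Finset (ZMod n)) ∈ H then 1 else 0) := by
    rw [Finset.sum_add_distrib, TT, Finset.card_filter]
    simp [mul_comm]
  rw [e, e']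
  refine Finset.sum_le_sum ?_
  rintro ⟨a, b, c⟩ ht
  simp only [CW, Finset.mem_filter, Finset.mem_univ, true_and] at ht
  have hk := key hS ht
  by_cases hx : NE H a b <;> by_cases hy : NE H b c <;> by_cases hz : NE H c a <;>
    by_cases hw : ({a, b, c} : Finset (ZMod n)) ∈ H <;>
    first
    | exact absurd (hk hx hy hz) hw
    | simp [ind, rho, hx, hy, hz, hw]

lemma wt_sum [NeZero n] (hS : ¬ HasS2 n H) :
    n * (TT H).card ≤ 3 * ∑ t ∈ TT H, wt H t + 3 * (TT H).card := by
  have r1 := sum_rho_TT (H := H) (wt H)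
  have r2 := sum_rho_TT (H := H) (fun t => wt H (rho t))
  have e : ∑ t ∈ TT H, (wt H t + wt H (rho t) + wt H (rho (rho t)) + 3) =
      3 * ∑ t ∈ TT H, wt H t + 3 * (TT H).card := by
    rw [Finset.sum_add_distrib, Finset.sum_add_distrib, Finset.sum_add_distrib,
      Finset.sum_const, smul_eq_mul]
    omega
  rw [← e, mul_comm, ← smul_eq_mul, ← Finset.sum_const]
  refine Finset.sum_le_sum ?_
  rintro ⟨a, b, c⟩ ht
  simp only [TT, CW, Finset.mem_filter, Finset.mem_univ, true_and] at ht
  exact wt_lower hS ht.1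

lemma CW_card [NeZero n] : 2 * (CW n).card ≤ n ^ 3 := by
  classical
  let f : ZMod n × ZMod n × ZMod n → ZMod n × ZMod n × ZMod n := fun t => (t.1, t.2.2, t.2.1)
  have hf : Function.Injective f := by
    rintro ⟨a, b, c⟩ ⟨a', b', c'⟩ h
    simp only [f, Prod.mk.injEq] at h ⊢
    tauto
  have hd : Disjoint (CW n) ((CW n).image f) := by
    rw [Finset.disjoint_left]
    rintro ⟨a, b, c⟩ h1 h2
    rw [Finset.mem_image] at h2
    obtain ⟨⟨a', b', c'⟩, h3, h4⟩ := h2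
    simp only [f, Prod.mk.injEq] at h4
    obtain ⟨rfl, rfl, rfl⟩ := h4
    simp only [CW, Finset.mem_filter, Finset.mem_univ, true_and] at h1 h3
    unfold Cw at *
    omega
  have h1 := Finset.card_le_univ (CW n ∪ (CW n).image f)
  rw [Finset.card_union_of_disjoint hd, Finset.card_image_of_injective _ hf] at h1
  simp only [Fintype.card_prod, ZMod.card] at h1
  calc 2 * (CW n).card ≤ n * (n * n) := by omega
    _ = n ^ 3 := by ring

lemma TT_card_lower [NeZero n] (hH : IsCgh n H) : 3 * H.card ≤ (TT H).card := by
  classical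
  have hmap : ∀ t ∈ TT H, ({t.1, t.2.1, t.2.2} : Finset (ZMod n)) ∈ H := by
    intro t ht
    exact (Finset.mem_filter.mp ht).2
  rw [Finset.card_eq_sum_card_fiberwise hmap, mul_comm, ← smul_eq_mul, ← Finset.sum_const]
  refine Finset.sum_le_sum ?_
  intro e he
  have : ∃ a b c, Cw a b c ∧ e = {a, b, c} := by
    obtain ⟨a, b, c, hab, hac, hbc, rfl⟩ := Finset.card_eq_three.mp (hH e he)
    by_cases h : Cw a b c
    · exact ⟨a, b, c, h, rfl⟩
    · refine ⟨a, c, b, ?_, set_swap _ _ _⟩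
      have := ne_val hab
      have := ne_val hac
      have := ne_val hbc
      unfold Cw at *
      omega
  obtain ⟨a, b, c, h, rfl⟩ := this
  have hab : a ≠ b := by rintro rfl; unfold Cw at h; omega
  have hbc : b ≠ c := by rintro rfl; unfold Cw at h; omega
  have hac : a ≠ c := by rintro rfl; unfold Cw at h; omega
  have h3 : ({(a, b, c), (b, c, a), (c, a, b)} : Finset (ZMod n × ZMod n × ZMod n)).card = 3 := by
    rw [Finset.card_eq_three]
    exact ⟨_, _, _, by simp [hab], by simp [hac], by simp [hbc], rfl⟩
  rw [← h3]
  refine Finset.card_le_card ?_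
  intro t ht
  simp only [Finset.mem_insert, Finset.mem_singleton] at ht
  simp only [TT, CW, Finset.mem_filter, Finset.mem_univ, true_and]
  rcases ht with rfl | rfl | rfl
  · exact ⟨⟨h, he⟩, rfl⟩
  · exact ⟨⟨h.rot, by rw [← set_rot]; exact he⟩, (set_rot _ _ _).symm⟩
  · exact ⟨⟨h.rot.rot, by rw [set_rot]; exact he⟩, set_rot _ _ _⟩

lemma main_bound [NeZero n] (hH : IsCgh n H) (hS : ¬ HasS2 n H) :
    3 * H.card ≤ n ^ 2 + 60 * n := by
  have h1 := TT_card_lower hH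
  have h2 := CW_card (n := n)
  have h3 := wt_sum hS
  have h4 := wt_upper (H := H)
  have h5 := ind_upper hS
  have h6 : (TT H).card ≤ (CW n).card := Finset.card_le_card (Finset.filter_subset _ _)
  refine h1.trans ?_
  generalize (TT H).card = T at *
  by_cases hn : n < 8
  · have : n ^ 3 ≤ 49 * n := by
      have : n * n ≤ 7 * 7 := Nat.mul_le_mul (by omega) (by omega)
      nlinarith
    nlinarith
  · push Not at hn
    have h7 : n * T ≤ n ^ 3 + 4 * T := by omega
    obtain ⟨m, rfl⟩ := Nat.exists_eq_add_of_le hn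
    by_contra hcon
    push Not at hcon
    nlinarith

end S2Proof

theorem ex_S2_upper :
    ∃ C : ℝ, 0 < C ∧ ∀ n : ℕ, 3 ≤ n →
      ∀ H : Finset (Finset (ZMod n)), IsCgh n H → ¬ HasS2 n H →
        (H.card : ℝ) ≤ 23 / 64 * n ^ 2 + C * n := by
  refine ⟨20, by norm_num, ?_⟩
  intro n hn H hH hS
  haveI : NeZero n := ⟨by omega⟩
  have h := S2Proof.main_bound hH hS
  have h' : (3 : ℝ) * H.card ≤ (n : ℝ) ^ 2 + 60 * n := by exact_mod_cast h
  have : (0 : ℝ) ≤ (n : ℝ) ^ 2 := sq_nonneg _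
  linarith
end
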